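/- arXiv:math/0403346 — 2 statements merged into one kernel-verified Lean document; each statement's English description precedes it below -/
import Mathlib

section
/- Let U_q^P(b_−) be the subalgebra of U_q^P(gl_n) generated by G_1^{±1},…,G_n^{±1}, F_1,…,F_{n−1}, and F_q^P[B_−] the quantum function algebra of the lower Borel. Then the assignment G_i^{±1} ↦ t_{ii}^{∓1}, F_j ↦ (q − q^{−1})^{−1} t_{j+1,j+1}^{−1} t_{j+1,j} extends to an isomorphism of Hopf k(q)-algebras ζ_− : U_q^P(b_−) → F_q^P[B_−]. -/
/-!
The map `ζ_−` is an isomorphism because both algebras are presented by the same generators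
`G_i^{±1}`, `F_j` and the same relations: those of the structure `IsBorel` below. Neither
presentation is part of the definitions. `F_q^P[B_−]` is given by many more generators `t_{ij}` and
quadratic relations, while `U_q^P(b_−)` is a subalgebra of `U_q^P(gl_n)`, where extra relations
between the `G_i^{±1}`, `F_j` could a priori be forced by the `E_i`.

For `F_q^P[B_−]` the relation
`t_{ij} t_{i+1,i} - t_{i+1,i} t_{ij} = (q - q⁻¹) t_{ii} t_{i+1,j}` expresses every `t_{ij}` through
the diagonal and the subdiagonal. Read as a recursive definition (`tt`), it produces quantum root
vectors in any algebra with elements satisfying the Borel relations. These satisfy all the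
relations of the q-matrix (`BD.row`, `BD.col`, `BD.nested`, `BD.disjoint`, `BD.mix`); the only
step that is not an extension of a known `q`-commutation by one more simple root vector is
`BD.core`, which uses `q + q⁻¹ ≠ 0`. This gives the universal property `fq_lift`.

For `U_q^P(b_−)` the candidate is the Verma-type module `F_q^P[B_−]`, on which `G_i^{±1}`, `F_j` act
by left multiplication and each `E_i` by a twisted derivation annihilating `1`. The twisted
derivation is the off-diagonal entry of a homomorphism into upper triangular `2 × 2` matrices, which
exists by the universal property (`exists_verma`). The relations among the operators `E_i` hold
since their failure is an operator killing `1` and `q`-commuting with left multiplication by the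
generators (`fq_vanish`); for the Serre relations this is the classical computation that
the Serre element commutes with all `F_k` (`IsTorus.serre_comm`). In this module an element `u` of
`U_q^P(b_−)` acts as left multiplication by `u · 1`, so `u ↦ u · 1` is an algebra homomorphism
`U_q^P(b_−) → F_q^P[B_−]`, inverse to the one supplied by `fq_lift`.

Compatibility with comultiplications and counits is checked on generators: by triangularity the sum
`Σ t_{il} ⊗ t_{lj}` has a single term on the diagonal and two on the subdiagonal.
-/

noncomputable section

/-- Generators of `U_q^P(gl_n)`: `E_1,…,E_{n−1}`, `F_1,…,F_{n−1}`,
`G_1^{+1},…,G_n^{+1}`, `G_1^{−1},…,G_n^{−1}` (0-indexed). -/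
inductive GlGen (n : ℕ) : Type
  | E : Fin (n - 1) → GlGen n
  | F : Fin (n - 1) → GlGen n
  | G : Fin n → GlGen n
  | Gi : Fin n → GlGen n

variable (K : Type) [Field K]

def fe (n : ℕ) (i : Fin (n - 1)) : FreeAlgebra K (GlGen n) := FreeAlgebra.ι K (GlGen.E i)
def ff (n : ℕ) (i : Fin (n - 1)) : FreeAlgebra K (GlGen n) := FreeAlgebra.ι K (GlGen.F i)
def fg (n : ℕ) (i : Fin n) : FreeAlgebra K (GlGen n) := FreeAlgebra.ι K (GlGen.G i)
def fgi (n : ℕ) (i : Fin n) : FreeAlgebra K (GlGen n) := FreeAlgebra.ι K (GlGen.Gi i)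

/-- The inclusion `Fin (n-1) → Fin n`, `i ↦ i` (the index `i` of `G_i`). -/
def idxlo {n : ℕ} (i : Fin (n - 1)) : Fin n := ⟨i.val, by have := i.isLt; omega⟩
/-- The inclusion `Fin (n-1) → Fin n`, `i ↦ i+1` (the index `i+1` of `G_{i+1}`). -/
def idxhi {n : ℕ} (i : Fin (n - 1)) : Fin n := ⟨i.val + 1, by have := i.isLt; omega⟩

/-- The defining relations of `U_q^P(gl_n)` (Chevalley–Serre type presentation). -/
inductive GlRel (q : K) (n : ℕ) : FreeAlgebra K (GlGen n) → FreeAlgebra K (GlGen n) → Prop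
  | ggi (i : Fin n) : GlRel q n (fg K n i * fgi K n i) 1
  | gig (i : Fin n) : GlRel q n (fgi K n i * fg K n i) 1
  | gg (i j : Fin n) : GlRel q n (fg K n i * fg K n j) (fg K n j * fg K n i)
  | ggi' (i j : Fin n) : GlRel q n (fg K n i * fgi K n j) (fgi K n j * fg K n i)
  | gigi (i j : Fin n) : GlRel q n (fgi K n i * fgi K n j) (fgi K n j * fgi K n i)
  | gf (i : Fin n) (j : Fin (n - 1)) :
      GlRel q n (fg K n i * ff K n j)
        ((q ^ (((if i.val = j.val + 1 then 1 else 0) - (if i.val = j.val then 1 else 0)) : ℤ)) •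
          (ff K n j * fg K n i))
  | ge (i : Fin n) (j : Fin (n - 1)) :
      GlRel q n (fg K n i * fe K n j)
        ((q ^ (((if i.val = j.val then 1 else 0) - (if i.val = j.val + 1 then 1 else 0)) : ℤ)) •
          (fe K n j * fg K n i))
  | ef (i j : Fin (n - 1)) :
      GlRel q n (fe K n i * ff K n j)
        (ff K n j * fe K n i +
          (if i = j then
            (q - q⁻¹)⁻¹ • (fg K n (idxlo i) * fgi K n (idxhi i) -
              fgi K n (idxlo i) * fg K n (idxhi i))
          else 0))
  | ee (i j : Fin (n - 1)) (h : i.val + 1 < j.val ∨ j.val + 1 < i.val) :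
      GlRel q n (fe K n i * fe K n j) (fe K n j * fe K n i)
  | ffcomm (i j : Fin (n - 1)) (h : i.val + 1 < j.val ∨ j.val + 1 < i.val) :
      GlRel q n (ff K n i * ff K n j) (ff K n j * ff K n i)
  | serreE (i j : Fin (n - 1)) (h : i.val + 1 = j.val ∨ j.val + 1 = i.val) :
      GlRel q n (fe K n i * fe K n i * fe K n j + fe K n j * (fe K n i * fe K n i))
        ((q + q⁻¹) • (fe K n i * fe K n j * fe K n i))
  | serreF (i j : Fin (n - 1)) (h : i.val + 1 = j.val ∨ j.val + 1 = i.val) :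
      GlRel q n (ff K n i * ff K n i * ff K n j + ff K n j * (ff K n i * ff K n i))
        ((q + q⁻¹) • (ff K n i * ff K n j * ff K n i))

/-- `U_q^P(gl_n)`, presented by Chevalley-type generators and relations. -/
def Uq (q : K) (n : ℕ) : Type := RingQuot (GlRel K q n)

instance (q : K) (n : ℕ) : Ring (Uq K q n) :=
  inferInstanceAs (Ring (RingQuot (GlRel K q n)))

instance (q : K) (n : ℕ) : Algebra K (Uq K q n) :=
  inferInstanceAs (Algebra K (RingQuot (GlRel K q n)))

def uE (q : K) (n : ℕ) (i : Fin (n - 1)) : Uq K q n :=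
  RingQuot.mkAlgHom K (GlRel K q n) (fe K n i)
def uF (q : K) (n : ℕ) (i : Fin (n - 1)) : Uq K q n :=
  RingQuot.mkAlgHom K (GlRel K q n) (ff K n i)
def uG (q : K) (n : ℕ) (i : Fin n) : Uq K q n :=
  RingQuot.mkAlgHom K (GlRel K q n) (fg K n i)
def uGi (q : K) (n : ℕ) (i : Fin n) : Uq K q n :=
  RingQuot.mkAlgHom K (GlRel K q n) (fgi K n i)

/-- `E_i`, `F_i`, `G_i^{±1}` indexed by natural numbers (junk value `0` out of range). -/
def eN (q : K) (n : ℕ) (i : ℕ) : Uq K q n := if h : i < n - 1 then uE K q n ⟨i, h⟩ else 0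
def fN (q : K) (n : ℕ) (i : ℕ) : Uq K q n := if h : i < n - 1 then uF K q n ⟨i, h⟩ else 0
def gN (q : K) (n : ℕ) (i : ℕ) : Uq K q n := if h : i < n then uG K q n ⟨i, h⟩ else 0
def giN (q : K) (n : ℕ) (i : ℕ) : Uq K q n := if h : i < n then uGi K q n ⟨i, h⟩ else 0

open scoped TensorProduct

/-- Generators of `F_q^P[B_−]`: the entries `t_{ij}` and the inverse `d⁻¹` of the
quantum determinant `t_{11}⋯t_{nn}`. -/
inductive BmGen (n : ℕ) : Type
  | t : Fin n → Fin n → BmGen n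
  | dinv : BmGen n

def mtt (n : ℕ) (i j : Fin n) : FreeAlgebra K (BmGen n) := FreeAlgebra.ι K (BmGen.t i j)
def mdinv (n : ℕ) : FreeAlgebra K (BmGen n) := FreeAlgebra.ι K (BmGen.dinv)

/-- The defining relations of `F_q^P[B_−]`: the q-matrix relations, the
lower-triangularity relations `t_{ij} = 0` for `i < j`, and the invertibility of
`t_{11} t_{22} ⋯ t_{nn}`. -/
inductive BmRel (q : K) (n : ℕ) : FreeAlgebra K (BmGen n) → FreeAlgebra K (BmGen n) → Prop
  | row (i j l : Fin n) (h : j < l) :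
      BmRel q n (mtt K n i j * mtt K n i l) (q • (mtt K n i l * mtt K n i j))
  | col (i h l : Fin n) (hlt : i < h) :
      BmRel q n (mtt K n i l * mtt K n h l) (q • (mtt K n h l * mtt K n i l))
  | cross (i j l m : Fin n) (h1 : i < j) (h2 : l < m) :
      BmRel q n (mtt K n i m * mtt K n j l) (mtt K n j l * mtt K n i m)
  | mix (i j l m : Fin n) (h1 : i < j) (h2 : l < m) :
      BmRel q n (mtt K n i l * mtt K n j m - mtt K n j m * mtt K n i l)
        ((q - q⁻¹) • (mtt K n i m * mtt K n j l))
  | tri (i j : Fin n) (h : i < j) : BmRel q n (mtt K n i j) 0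
  | detinv1 :
      BmRel q n ((((List.finRange n).map (fun i => mtt K n i i)).prod) * mdinv K n) 1
  | detinv2 :
      BmRel q n (mdinv K n * (((List.finRange n).map (fun i => mtt K n i i)).prod)) 1

/-- The quantum function algebra `F_q^P[B_−]` of the lower Borel subgroup. -/
def FqBm (q : K) (n : ℕ) : Type := RingQuot (BmRel K q n)

instance (q : K) (n : ℕ) : Ring (FqBm K q n) :=
  inferInstanceAs (Ring (RingQuot (BmRel K q n)))
instance (q : K) (n : ℕ) : Algebra K (FqBm K q n) :=
  inferInstanceAs (Algebra K (RingQuot (BmRel K q n)))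

def mT (q : K) (n : ℕ) (i j : Fin n) : FqBm K q n :=
  RingQuot.mkAlgHom K (BmRel K q n) (mtt K n i j)
def mDinv (q : K) (n : ℕ) : FqBm K q n :=
  RingQuot.mkAlgHom K (BmRel K q n) (mdinv K n)

/-- The quantum Borel subalgebra `U_q^P(b_−)`: the subalgebra of `U_q^P(gl_n)`
generated by `G_1^{±1},…,G_n^{±1}, F_1,…,F_{n−1}`. -/
def UbM (q : K) (n : ℕ) : Subalgebra K (Uq K q n) :=
  Algebra.adjoin K
    {x | (∃ i, x = uG K q n i) ∨ (∃ i, x = uGi K q n i) ∨ (∃ j, x = uF K q n j)}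

def mG (q : K) (n : ℕ) (i : Fin n) : UbM K q n :=
  ⟨uG K q n i, Algebra.subset_adjoin (Or.inl ⟨i, rfl⟩)⟩
def mGi (q : K) (n : ℕ) (i : Fin n) : UbM K q n :=
  ⟨uGi K q n i, Algebra.subset_adjoin (Or.inr (Or.inl ⟨i, rfl⟩))⟩
def mF (q : K) (n : ℕ) (j : Fin (n - 1)) : UbM K q n :=
  ⟨uF K q n j, Algebra.subset_adjoin (Or.inr (Or.inr ⟨j, rfl⟩))⟩


/-! ### Commutation up to a scalar -/

section QComm

variable {K} {A : Type*} [Ring A] [Algebra K A]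

/-- `a` and `b` commute up to the scalar `s`: `a b = s b a`. -/
def QC (s : K) (a b : A) : Prop := a * b = s • (b * a)

namespace QC

variable {s s' u : K} {a b c d e : A}

theorem mul (h : QC s a b) (h' : QC s' a c) : QC (s * s') a (b * c) := by
  unfold QC at *
  rw [← mul_assoc, h, smul_mul_assoc, mul_assoc, h', mul_smul_comm, smul_smul, mul_assoc]

theorem sub (h : QC s a b) (h' : QC s a c) : QC s a (b - c) := by
  unfold QC at *
  rw [mul_sub, h, h', sub_mul, smul_sub]

theorem smul (r : K) (h : QC s a b) : QC s a (r • b) := by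
  unfold QC at *
  rw [mul_smul_comm, h, smul_mul_assoc, smul_comm]

theorem symm (h : QC s a b) (hs : s ≠ 0) : QC s⁻¹ b a := by
  unfold QC at *
  rw [h, smul_smul, inv_mul_cancel₀ hs, one_smul]

theorem symm1 (h : QC (1 : K) a b) : QC (1 : K) b a := by
  simpa using h.symm one_ne_zero

theorem inv (h : QC s a d) (hs : s ≠ 0) (h1 : d * e = 1) (h2 : e * d = 1) : QC s⁻¹ a e := by
  unfold QC at *
  have : e * (a * d) * e = s • (a * e) := by
    rw [h, mul_smul_comm, smul_mul_assoc, ← mul_assoc e, h2, one_mul]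
  rw [← mul_assoc, mul_assoc, h1, mul_one] at this
  rw [this, smul_smul, inv_mul_cancel₀ hs, one_smul]

theorem one_iff : QC (1 : K) a b ↔ a * b = b * a := by
  unfold QC; rw [one_smul]

theorem zero_right : QC s a 0 := by simp [QC]

theorem zero_left : QC s 0 a := by simp [QC]

/-- `q`-commutation passes to the renormalised commutator `e [b, c]`, `e = d⁻¹`. -/
theorem bracket {v : K} (r : K) (h1 : d * e = 1) (h2 : e * d = 1) (hb : QC s a b)
    (hc : QC s' a c) (hd : QC u a d) (hu : u ≠ 0) (hv : v = u⁻¹ * (s * s')) :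
    QC v a (r • (e * (b * c - c * b))) := by
  subst hv
  exact (((hd.inv hu h1 h2).mul ((hb.mul hc).sub (by rw [mul_comm s s']; exact hc.mul hb)))).smul r

end QC

end QComm

/-! ### Quantum root vectors and the q-matrix relations -/

section RootVectors

variable {K} {A : Type*} [Ring A] [Algebra K A]

/-- A representation of the lower Borel algebra in `A`, with indices extended to all of `ℕ`:
`d i` plays the role of `t_{ii}`, `e i` of its inverse and `x j` of `t_{j+1,j}`. The last two
fields are the quantum Serre relations, written with the commutator `d_{j+1}⁻¹ [x_j, x_{j+1}]`. -/
structure BD (q : K) (d e x : ℕ → A) : Prop where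
  q0 : q ≠ 0
  qm : q - q⁻¹ ≠ 0
  qp : q + q⁻¹ ≠ 0
  de : ∀ i, d i * e i = 1
  ed : ∀ i, e i * d i = 1
  dd : ∀ i j, QC (1 : K) (d i) (d j)
  dx0 : ∀ i j, i ≠ j → i ≠ j + 1 → QC (1 : K) (d i) (x j)
  dx1 : ∀ j, QC q (d j) (x j)
  dx2 : ∀ j, QC q⁻¹ (d (j + 1)) (x j)
  xx : ∀ i j, i + 1 < j → QC (1 : K) (x i) (x j)
  s1 : ∀ j, QC q (x j) (e (j + 1) * (x j * x (j + 1) - x (j + 1) * x j))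
  s2 : ∀ j, QC q⁻¹ (x (j + 1)) (e (j + 1) * (x j * x (j + 1) - x (j + 1) * x j))

/-- The quantum root vectors: the candidates for `t_{ij}`, built from `d` and `x` by solving the
relation `t_{ij} t_{i+1,i} - t_{i+1,i} t_{ij} = (q - q⁻¹) t_{ii} t_{i+1,j}` for `t_{i+1,j}`. -/
def tt (q : K) (d e x : ℕ → A) : ℕ → ℕ → A
  | 0, j => if j = 0 then d 0 else 0
  | i + 1, j => if i + 1 < j then 0 else if j = i + 1 then d (i + 1) else if j = i then x i else
      (q - q⁻¹)⁻¹ • (e i * (tt q d e x i j * x i - x i * tt q d e x i j))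

theorem tt_lt (q : K) (d e x : ℕ → A) {i j : ℕ} (h : i < j) : tt q d e x i j = 0 := by
  cases i with
  | zero => simp [tt]; omega
  | succ i => simp [tt, h]

theorem tt_self (q : K) (d e x : ℕ → A) (i : ℕ) : tt q d e x i i = d i := by
  cases i <;> simp [tt]

theorem tt_succ (q : K) (d e x : ℕ → A) (i : ℕ) : tt q d e x (i + 1) i = x i := by
  simp [tt]

theorem tt_step (q : K) (d e x : ℕ → A) {i j : ℕ} (h : j < i) : tt q d e x (i + 1) j =
    (q - q⁻¹)⁻¹ • (e i * (tt q d e x i j * x i - x i * tt q d e x i j)) := by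
  rw [tt, if_neg (by omega), if_neg (by omega), if_neg (by omega)]

namespace BD

variable {q : K} {d e x : ℕ → A} (H : BD q d e x)
include H

/-- Propagation of `q`-commutation along the recursion defining `t_{i+1,j}`. -/
theorem step {s s' u v : K} {a : A} {i j : ℕ} (h : j < i) (hb : QC s a (tt q d e x i j))
    (hc : QC s' a (x i)) (hd : QC u a (d i)) (hu : u ≠ 0) (hv : v = u⁻¹ * (s * s')) :
    QC v a (tt q d e x (i + 1) j) := by
  rw [tt_step q d e x h]
  exact QC.bracket _ (H.de i) (H.ed i) hb hc hd hu hv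

theorem step1 {a : A} {i j : ℕ} (h : j < i) (hb : QC (1 : K) a (tt q d e x i j))
    (hc : QC (1 : K) a (x i)) (hd : QC (1 : K) a (d i)) : QC (1 : K) a (tt q d e x (i + 1) j) :=
  H.step h hb hc hd one_ne_zero (by simp)

/-- `t_{kk}` commutes with `t_{ij}` for `k ≠ i, j`. The induction on `i` has to keep track of the
case `k = i` as well, where the scalar is `q⁻¹`. -/
theorem d_ne {k i j : ℕ} (hi : k ≠ i) (hj : k ≠ j) : QC (1 : K) (d k) (tt q d e x i j) := by
  have hq := H.q0
  have aux : ∀ i, (k = i → j < i → QC q⁻¹ (d k) (tt q d e x i j)) ∧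
      (k ≠ i → QC (1 : K) (d k) (tt q d e x i j)) := by
    intro i
    induction i with
    | zero =>
      refine ⟨fun _ h => by omega, fun _ => ?_⟩
      rcases Nat.eq_zero_or_pos j with rfl | h
      · rw [tt_self]; exact H.dd _ _
      · rw [tt_lt _ _ _ _ h]; exact QC.zero_right
    | succ i ih =>
      rcases lt_trichotomy j i with h | rfl | h
      · refine ⟨fun hk _ => ?_, fun hk => ?_⟩
        · subst hk
          exact H.step h (ih.2 (by omega)) (H.dx2 i) (H.dd _ _) one_ne_zero (by simp)
        · by_cases hki : k = i
          · subst hki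
            exact H.step h (ih.1 rfl h) (H.dx1 k) (H.dd _ _) one_ne_zero (by field_simp)
          · exact H.step1 h (ih.2 hki) (H.dx0 _ _ hki hk) (H.dd _ _)
      · rw [tt_succ]
        exact ⟨fun hk _ => hk ▸ H.dx2 j, fun hk => H.dx0 _ _ hj hk⟩
      · refine ⟨fun _ _ => by omega, fun hk => ?_⟩
        rcases Nat.lt_or_ge (i + 1) j with h' | h'
        · rw [tt_lt _ _ _ _ h']; exact QC.zero_right
        · obtain rfl : j = i + 1 := by omega
          rw [tt_self]; exact H.dd _ _
  exact (aux i).2 hi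

theorem d_hi {i j : ℕ} (h : j < i) : QC q⁻¹ (d i) (tt q d e x i j) := by
  obtain ⟨i, rfl⟩ : ∃ m, i = m + 1 := ⟨i - 1, by omega⟩
  rcases Nat.lt_or_ge j i with h' | h'
  · exact H.step h' (H.d_ne (by omega) (by omega)) (H.dx2 i) (H.dd _ _) one_ne_zero (by simp)
  · obtain rfl : j = i := by omega
    rw [tt_succ]; exact H.dx2 j

theorem d_lo {i j : ℕ} (h : j < i) : QC q (d j) (tt q d e x i j) := by
  induction i, h using Nat.le_induction with
  | base => rw [tt_succ]; exact H.dx1 j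
  | succ i hi ih =>
    exact H.step hi ih (H.dx0 _ _ (by omega) (by omega)) (H.dd _ _) one_ne_zero (by simp)

theorem x_far_r {p i j : ℕ} (h : i < p) : QC (1 : K) (x p) (tt q d e x i j) := by
  induction i with
  | zero =>
    rcases Nat.eq_zero_or_pos j with rfl | h'
    · rw [tt_self]; exact (H.dx0 _ _ (by omega) (by omega)).symm1
    · rw [tt_lt _ _ _ _ h']; exact QC.zero_right
  | succ i ih =>
    rcases lt_trichotomy j i with h' | rfl | h'
    · exact H.step1 h' (ih (by omega)) (H.xx _ _ h).symm1 (H.dx0 _ _ (by omega) (by omega)).symm1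
    · rw [tt_succ]; exact (H.xx _ _ h).symm1
    · rcases Nat.lt_or_ge (i + 1) j with h' | h'
      · rw [tt_lt _ _ _ _ h']; exact QC.zero_right
      · obtain rfl : j = i + 1 := by omega
        rw [tt_self]; exact (H.dx0 _ _ (by omega) (by omega)).symm1

theorem x_far_l {p i j : ℕ} (h : p + 1 < j) : QC (1 : K) (x p) (tt q d e x i j) := by
  rcases Nat.lt_or_ge i j with hij | hij
  · rw [tt_lt _ _ _ _ hij]; exact QC.zero_right
  induction i, hij using Nat.le_induction with
  | base => rw [tt_self]; exact (H.dx0 _ _ (by omega) (by omega)).symm1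
  | succ i hi ih =>
    rcases hi.eq_or_lt with rfl | hi
    · rw [tt_succ]; exact H.xx _ _ h
    · exact H.step1 hi ih (H.xx _ _ (by omega)) (H.dx0 _ _ (by omega) (by omega)).symm1

theorem def_r {i j : ℕ} (h : j < i) : tt q d e x i j * x i - x i * tt q d e x i j =
    (q - q⁻¹) • (d i * tt q d e x (i + 1) j) := by
  rw [tt_step _ _ _ _ h, mul_smul_comm, smul_smul, mul_inv_cancel₀ H.qm, one_smul, ← mul_assoc,
    H.de, one_mul]

/-- The commutator of adjacent root vectors is `d_p` times the root vector of the union. -/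
theorem touch {l p j : ℕ} (hl : l < p) (hj : p < j) :
    tt q d e x p l * tt q d e x j p - tt q d e x j p * tt q d e x p l =
      (q - q⁻¹) • (d p * tt q d e x j l) := by
  induction j, hj using Nat.le_induction with
  | base => rw [tt_succ]; exact H.def_r hl
  | succ j hj ih =>
    have hj : p < j := hj
    have hx := QC.one_iff.1 (H.x_far_r (p := j) (i := p) (j := l) hj)
    have hd := QC.one_iff.1 (by
      simpa using (H.d_ne (k := j) (i := p) (j := l) (by omega) (by omega)).symm1.inv one_ne_zero
        (H.de j) (H.ed j))
    have hdd := QC.one_iff.1 (by simpa using (H.dd p j).inv one_ne_zero (H.de j) (H.ed j))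
    have hdx := QC.one_iff.1 (H.dx0 p j (by omega) (by omega))
    rw [tt_step _ _ _ _ hj, tt_step _ _ _ _ (hl.trans hj), mul_smul_comm, smul_mul_assoc,
      ← smul_sub, mul_smul_comm, smul_comm (q - q⁻¹)]
    congr 1
    set P := tt q d e x p l
    set Y := tt q d e x j p
    set Z := tt q d e x j l
    calc P * (e j * (Y * x j - x j * Y)) - e j * (Y * x j - x j * Y) * P
        = (P * e j) * (Y * x j - x j * Y) - e j * (Y * x j - x j * Y) * P := by noncomm_ring
      _ = e j * (P * Y * x j - (P * x j) * Y - Y * (x j * P) + x j * Y * P) := by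
          rw [hd]; noncomm_ring
      _ = e j * (P * Y * x j - (x j * P) * Y - Y * (P * x j) + x j * Y * P) := by
          rw [hx]
      _ = e j * ((P * Y - Y * P) * x j - x j * (P * Y - Y * P)) := by
          noncomm_ring
      _ = (q - q⁻¹) • (e j * (d p * Z * x j - (x j * d p) * Z)) := by
          rw [ih]
          simp only [smul_mul_assoc, mul_smul_comm, ← smul_sub, mul_assoc]
      _ = (q - q⁻¹) • ((e j * d p) * (Z * x j - x j * Z)) := by
          rw [← hdx]; congr 1; noncomm_ring
      _ = (q - q⁻¹) • (d p * (e j * (Z * x j - x j * Z))) := by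
          rw [← hdd, mul_assoc]

theorem eq_of_touch {l p j : ℕ} (hl : l < p) (hj : p < j) : tt q d e x j l =
    (q - q⁻¹)⁻¹ • (e p * (tt q d e x p l * tt q d e x j p - tt q d e x j p * tt q d e x p l)) := by
  rw [H.touch hl hj, mul_smul_comm, smul_smul, inv_mul_cancel₀ H.qm, one_smul, ← mul_assoc, H.ed,
    one_mul]

/-- Propagation of `q`-commutation from `t_{i,j+1}` to `t_{ij}`: the recursion may as well be run
at the lower end, since `t_{ij}` is also obtained from `x_j` and `t_{i,j+1}`. -/
theorem stepL {s s' u v : K} {a : A} {i j : ℕ} (h : j + 1 < i) (hb : QC s a (x j))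
    (hc : QC s' a (tt q d e x i (j + 1))) (hd : QC u a (d (j + 1))) (hu : u ≠ 0)
    (hv : v = u⁻¹ * (s * s')) : QC v a (tt q d e x i j) := by
  rw [H.eq_of_touch (Nat.lt_succ_self j) h, tt_succ]
  exact QC.bracket _ (H.de _) (H.ed _) hb hc hd hu hv

theorem x_lo {l i : ℕ} (h : l + 1 < i) : QC q (x l) (tt q d e x i l) := by
  induction i, h using Nat.le_induction with
  | base =>
    rw [show (l + 1).succ = l + 1 + 1 from rfl, tt_step _ _ _ _ (Nat.lt_succ_self l), tt_succ]
    exact (H.s1 l).smul _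
  | succ i hi ih =>
    exact H.step (by omega) ih (H.xx _ _ hi) (H.dx0 _ _ (by omega) (by omega)).symm1 one_ne_zero
      (by simp)

theorem x_hi {l p : ℕ} (h : l < p) : QC q⁻¹ (x p) (tt q d e x (p + 1) l) := by
  obtain ⟨m, rfl⟩ : ∃ m, p = l + 1 + m := ⟨p - (l + 1), by omega⟩
  induction m generalizing l with
  | zero =>
    rw [Nat.add_zero, tt_step _ _ _ _ (Nat.lt_succ_self l), tt_succ]
    exact (H.s2 l).smul _
  | succ m ih =>
    have := ih (l := l + 1) (by omega)
    rw [show l + 1 + 1 + m = l + 1 + (m + 1) by omega] at this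
    exact H.stepL (by omega) (H.xx _ _ (by omega)).symm1 this
      (H.dx0 _ _ (by omega) (by omega)).symm1 one_ne_zero (by simp)

/-- The overlap relation, up to an as yet unknown commutator of `t_{im}` and `t_{jl}`. -/
theorem overlap_aux {l m i j : ℕ} (hlm : l < m) (hmi : m < i) (hij : i < j)
    (hr : QC q (tt q d e x i l) (tt q d e x i m)) :
    tt q d e x i l * tt q d e x j m - tt q d e x j m * tt q d e x i l =
      q • (tt q d e x i m * tt q d e x j l) - q⁻¹ • (tt q d e x j l * tt q d e x i m) := by
  have hq := H.q0
  have hd : QC q⁻¹ (tt q d e x i l) (e i) := by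
    have := (H.d_hi (hlm.trans hmi)).symm (inv_ne_zero hq)
    rw [inv_inv] at this
    exact this.inv hq (H.de i) (H.ed i)
  have hd' : tt q d e x i m * d i = q • (d i * tt q d e x i m) := by
    have := (H.d_hi hmi).symm (inv_ne_zero hq)
    rwa [inv_inv] at this
  have ht := H.touch (hlm.trans hmi) hij
  have hjm := H.eq_of_touch hmi hij
  have hed := H.ed i
  unfold QC at *
  set P := tt q d e x i l
  set Y := tt q d e x i m
  set Z := tt q d e x j i
  set W := tt q d e x j l
  have ht' : P * Z = Z * P + (q - q⁻¹) • (d i * W) := by rw [← ht]; abel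
  have h1 : P * (e i * (Y * Z - Z * Y)) = e i * (Y * Z - Z * Y) * P + (q - q⁻¹) •
      (q • (Y * W) - q⁻¹ • (W * Y)) := by
    have e1 : P * (Y * Z) = q • (Y * (Z * P)) + (q * (q - q⁻¹) * q) • (d i * (Y * W)) := by
      rw [← mul_assoc, hr, smul_mul_assoc, mul_assoc, ht', mul_add, mul_smul_comm, ← mul_assoc Y (d i),
        hd', smul_mul_assoc, mul_assoc, smul_add, smul_smul, smul_smul]
    have e2 : P * (Z * Y) = q • (Z * (Y * P)) + (q - q⁻¹) • (d i * (W * Y)) := by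
      rw [← mul_assoc, ht', add_mul, smul_mul_assoc, mul_assoc, hr, mul_smul_comm, mul_assoc]
    rw [← mul_assoc, hd, smul_mul_assoc, mul_assoc, mul_sub, e1, e2]
    have e3 : ∀ V, e i * (d i * V) = V := fun V => by rw [← mul_assoc, hed, one_mul]
    simp only [mul_sub, mul_add, sub_mul, mul_assoc, mul_smul_comm, e3]
    match_scalars <;> field_simp
  rw [hjm, mul_smul_comm, h1, smul_add, smul_smul, inv_mul_cancel₀ H.qm, one_smul, smul_mul_assoc]
  abel

/-- The only nested pair not reached by the extension arguments: `t_{l+2,l+1}` inside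
`t_{l+3,l}`. Expanding `[t_{l+2,l}, t_{l+3,l+1}]` in its first and in its second entry gives
`(q + q⁻¹) [t_{l+2,l+1}, t_{l+3,l}] = 0`. -/
theorem core (l : ℕ) : QC (1 : K) (x (l + 1)) (tt q d e x (l + 3) l) := by
  have hq := H.q0
  have hr : QC q (tt q d e x (l + 2) l) (tt q d e x (l + 2) (l + 1)) := by
    rw [tt_succ]
    simpa using (H.x_hi (Nat.lt_succ_self l)).symm (inv_ne_zero hq)
  have h1 := H.overlap_aux (l := l) (m := l + 1) (i := l + 2) (j := l + 3) (by omega) (by omega)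
    (by omega) hr
  rw [tt_succ] at h1
  have hY : QC q (x (l + 1)) (tt q d e x (l + 3) (l + 1)) := H.x_lo (by omega)
  have hYe : QC q (tt q d e x (l + 3) (l + 1)) (e (l + 1)) := by
    simpa using ((H.d_lo (i := l + 3) (j := l + 1) (by omega)).symm hq).inv (inv_ne_zero hq)
      (H.de _) (H.ed _)
  have hbd : QC q⁻¹ (x (l + 1)) (d (l + 1)) := (H.dx1 _).symm hq
  have ha := H.touch (l := l) (p := l + 1) (j := l + 3) (by omega) (by omega)
  rw [tt_succ] at ha
  have hP : tt q d e x (l + 2) l =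
      (q - q⁻¹)⁻¹ • (e (l + 1) * (x l * x (l + 1) - x (l + 1) * x l)) := by
    rw [tt_step _ _ _ _ (Nat.lt_succ_self l), tt_succ]
  have hed := H.ed (l + 1)
  have hqm := H.qm
  rw [QC.one_iff]
  unfold QC at *
  set Y := tt q d e x (l + 3) (l + 1)
  set W := tt q d e x (l + 3) l
  set P := tt q d e x (l + 2) l
  set a := x l
  set b := x (l + 1)
  have ha' : a * Y = Y * a + (q - q⁻¹) • (d (l + 1) * W) := by rw [← ha]; abel
  have e1 : (a * b - b * a) * Y = q • (Y * (a * b - b * a)) +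
      (q - q⁻¹) • (d (l + 1) * (q • (W * b) - q⁻¹ • (b * W))) := by
    have e1a : a * (b * Y) = q • (Y * (a * b) + (q - q⁻¹) • (d (l + 1) * (W * b))) := by
      rw [hY, mul_smul_comm, ← mul_assoc, ha', add_mul, smul_mul_assoc, mul_assoc, mul_assoc]
    have e1b : b * (a * Y) = q • (Y * (b * a)) +
        ((q - q⁻¹) * q⁻¹) • (d (l + 1) * (b * W)) := by
      rw [ha', mul_add, mul_smul_comm, ← mul_assoc, hY, smul_mul_assoc, ← mul_assoc b (d (l + 1)),
        hbd, smul_mul_assoc, smul_smul, mul_assoc, mul_assoc]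
    rw [sub_mul, mul_assoc, mul_assoc, e1a, e1b]
    simp only [mul_sub, mul_smul_comm]
    module
  have h2 : P * Y - Y * P = q • (W * b) - q⁻¹ • (b * W) := by
    rw [hP, smul_mul_assoc, mul_assoc, e1, mul_smul_comm, ← mul_assoc Y, hYe, mul_add,
      mul_smul_comm, mul_smul_comm, ← mul_assoc (e (l + 1)) (d (l + 1)), hed, one_mul, smul_add,
      smul_smul _ (q - q⁻¹), inv_mul_cancel₀ hqm, one_smul, smul_mul_assoc, mul_assoc]
    abel
  rw [h1] at h2
  have h3 : (q + q⁻¹) • (b * W - W * b) = 0 := by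
    have : (q + q⁻¹) • (b * W - W * b) =
      (q • (b * W) - q⁻¹ • (W * b)) - (q • (W * b) - q⁻¹ • (b * W)) := by module
    rw [this, h2, sub_self]
  exact sub_eq_zero.1 ((smul_eq_zero.1 h3).resolve_left H.qp)

/-- A simple root vector strictly inside the interval `[l, i]` commutes with `t_{il}`; this is
`core` extended at both ends. -/
theorem x_mid {l p i : ℕ} (hl : l < p) (hi : p + 1 < i) : QC (1 : K) (x p) (tt q d e x i l) := by
  induction i, hi using Nat.le_induction with
  | base =>
    obtain ⟨m, rfl⟩ : ∃ m, p = l + 1 + m := ⟨p - (l + 1), by omega⟩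
    induction m generalizing l with
    | zero => exact H.core l
    | succ m ih =>
      have := ih (l := l + 1) (by omega)
      rw [show l + 1 + 1 + m = l + 1 + (m + 1) by omega] at this
      exact H.stepL (by omega) (H.xx _ _ (by omega)).symm1 this
        (H.dx0 _ _ (by omega) (by omega)).symm1 one_ne_zero (by simp)
  | succ i hi ih =>
    exact H.step1 (by omega) ih (H.xx _ _ hi) (H.dx0 _ _ (by omega) (by omega)).symm1

/-- Root vectors with disjoint supports commute; in the `mix` relation this is the case `t_{im} = 0`. -/
theorem disjoint {l i m j : ℕ} (h : i < m) : QC (1 : K) (tt q d e x i l) (tt q d e x j m) := by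
  rcases Nat.lt_or_ge i l with hil | hil
  · rw [tt_lt _ _ _ _ hil]; exact QC.zero_left
  rcases Nat.lt_or_ge j m with hij | hij
  · rw [tt_lt _ _ _ _ hij]; exact QC.zero_right
  induction j, hij using Nat.le_induction with
  | base => rw [tt_self]; exact (H.d_ne (by omega) (by omega)).symm1
  | succ j hj ih =>
    rcases hj.eq_or_lt with rfl | hj
    · rw [tt_succ]; exact (H.x_far_r h).symm1
    · exact H.step1 hj ih (H.x_far_r (by omega)).symm1 (H.d_ne (by omega) (by omega)).symm1

theorem nested {l m i j : ℕ} (hl : m < l) (hi : i < j) :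
    QC (1 : K) (tt q d e x j m) (tt q d e x i l) := by
  rcases Nat.lt_or_ge i l with hil | hil
  · rw [tt_lt _ _ _ _ hil]; exact QC.zero_right
  induction i, hil using Nat.le_induction with
  | base => rw [tt_self]; exact (H.d_ne (by omega) (by omega)).symm1
  | succ i hj ih =>
    rcases hj.eq_or_lt with rfl | hj
    · rw [tt_succ]; exact (H.x_mid hl hi).symm1
    · exact H.step1 hj (ih (by omega)) (H.x_mid (by omega) hi).symm1
        (H.d_ne (by omega) (by omega)).symm1

theorem col {l i j : ℕ} (hi : i < j) : QC q (tt q d e x i l) (tt q d e x j l) := by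
  rcases Nat.lt_or_ge i l with hil | hil
  · rw [tt_lt _ _ _ _ hil]; exact QC.zero_left
  suffices h : QC q⁻¹ (tt q d e x j l) (tt q d e x i l) by
    simpa using h.symm (inv_ne_zero H.q0)
  induction i, hil using Nat.le_induction with
  | base => rw [tt_self]; exact (H.d_lo hi).symm H.q0
  | succ i hj ih =>
    rcases hj.eq_or_lt with rfl | hj
    · rw [tt_succ]; exact (H.x_lo hi).symm H.q0
    · exact H.step hj (ih (by omega)) (H.x_mid (by omega) hi).symm1
        (H.d_ne (by omega) (by omega)).symm1 one_ne_zero (by simp)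

theorem row {m l i : ℕ} (hm : m < l) : QC q (tt q d e x i m) (tt q d e x i l) := by
  rcases Nat.lt_or_ge i l with hil | hil
  · rw [tt_lt _ _ _ _ hil]; exact QC.zero_right
  have hq := inv_ne_zero H.q0
  obtain ⟨p, rfl⟩ : ∃ p, i = l + p := ⟨i - l, by omega⟩
  induction p generalizing l with
  | zero => rw [Nat.add_zero, tt_self]; simpa using (H.d_hi hm).symm hq
  | succ p ih =>
    rcases Nat.eq_zero_or_pos p with rfl | hp
    · rw [Nat.zero_add, tt_succ]; simpa using (H.x_hi hm).symm hq
    · have := ih (l := l + 1) (by omega) (by omega)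
      rw [show l + 1 + p = l + (p + 1) by omega] at this
      exact H.stepL (by omega) (H.x_mid hm (by omega)).symm1 this
        (H.d_ne (by omega) (by omega)).symm1 one_ne_zero (by simp)

theorem mix {i j l m : ℕ} (hij : i < j) (hlm : l < m) :
    tt q d e x i l * tt q d e x j m - tt q d e x j m * tt q d e x i l =
      (q - q⁻¹) • (tt q d e x i m * tt q d e x j l) := by
  rcases lt_trichotomy i m with him | rfl | him
  · rw [tt_lt _ _ _ _ him, zero_mul, smul_zero, sub_eq_zero]
    exact QC.one_iff.1 (H.disjoint him)
  · rw [tt_self]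
    exact H.touch hlm hij
  · rw [H.overlap_aux hlm him hij (H.row hlm), QC.one_iff.1 (H.nested hlm hij), sub_smul]

end BD

end RootVectors

/-! ### Presentations of the lower Borel algebra -/

section BorelRelations

variable {K} {A : Type*} [Ring A] [Algebra K A]

/-- The defining relations of the lower Borel algebra, with indices extended to `ℕ`:
`d = G⁻¹`, `e = G`, and `f = F`. The Serre relations are expressed by the `q`-commutation of
`f_j`, `f_{j+1}` with `f_j f_{j+1} - q⁻¹ f_{j+1} f_j`. -/
structure NB (q : K) (d e f : ℕ → A) : Prop where
  de : ∀ i, d i * e i = 1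
  ed : ∀ i, e i * d i = 1
  dd : ∀ i j, QC (1 : K) (d i) (d j)
  df0 : ∀ i j, i ≠ j → i ≠ j + 1 → QC (1 : K) (d i) (f j)
  df1 : ∀ j, QC q (d j) (f j)
  df2 : ∀ j, QC q⁻¹ (d (j + 1)) (f j)
  ff : ∀ i j, i + 1 < j → QC (1 : K) (f i) (f j)
  s1 : ∀ j, QC q (f j) (f j * f (j + 1) - q⁻¹ • (f (j + 1) * f j))
  s2 : ∀ j, QC q⁻¹ (f (j + 1)) (f j * f (j + 1) - q⁻¹ • (f (j + 1) * f j))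

theorem QC.of_eq {s s' : K} {a b : A} (h : QC s a b) (hs : s = s') : QC s' a b := hs ▸ h

theorem QC.symm' {s : K} {a b : A} (h : QC s⁻¹ a b) (hs : s ≠ 0) : QC s b a := by
  simpa using h.symm (inv_ne_zero hs)

theorem QC.inv1 {a d e : A} (h : QC (1 : K) a d) (h1 : d * e = 1) (h2 : e * d = 1) :
    QC (1 : K) a e := by
  simpa using h.inv one_ne_zero h1 h2

/-- The change of generators `x_j = (q - q⁻¹) d_{j+1} f_j` turns the relations in `F_j` into
relations in `t_{j+1,j}`. -/
theorem NB.toBD {q : K} {d e f : ℕ → A} (H : NB q d e f) (q0 : q ≠ 0) (qm : q - q⁻¹ ≠ 0)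
    (qp : q + q⁻¹ ≠ 0) : BD q d e (fun j => (q - q⁻¹) • (d (j + 1) * f j)) := by
  have key : ∀ j, e (j + 1) * ((q - q⁻¹) • (d (j + 1) * f j) * (q - q⁻¹) • (d (j + 1 + 1) * f (j + 1))
      - (q - q⁻¹) • (d (j + 1 + 1) * f (j + 1)) * (q - q⁻¹) • (d (j + 1) * f j)) =
      ((q - q⁻¹) * (q - q⁻¹)) • (d (j + 2) * (f j * f (j + 1) - q⁻¹ • (f (j + 1) * f j))) := by
    intro j
    have h1 : f j * d (j + 2) = d (j + 2) * f j :=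
      QC.one_iff.1 (H.df0 (j + 2) j (by omega) (by omega)).symm1
    have h2 : f (j + 1) * d (j + 1) = q⁻¹ • (d (j + 1) * f (j + 1)) := (H.df1 (j + 1)).symm q0
    have h3 : d (j + 2) * d (j + 1) = d (j + 1) * d (j + 2) := QC.one_iff.1 (H.dd _ _)
    have h1' : ∀ y, f j * (d (j + 2) * y) = d (j + 2) * (f j * y) := fun y => by
      rw [← mul_assoc, h1, mul_assoc]
    have h2' : ∀ y, f (j + 1) * (d (j + 1) * y) = q⁻¹ • (d (j + 1) * (f (j + 1) * y)) := fun y => by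
      rw [← mul_assoc, h2, smul_mul_assoc, mul_assoc]
    have h3' : ∀ y, d (j + 2) * (d (j + 1) * y) = d (j + 1) * (d (j + 2) * y) := fun y => by
      rw [← mul_assoc, h3, mul_assoc]
    have h4 : ∀ y, e (j + 1) * (d (j + 1) * y) = y := fun y => by
      rw [← mul_assoc, H.ed, one_mul]
    simp only [show j + 1 + 1 = j + 2 from rfl, smul_mul_assoc, mul_smul_comm, mul_assoc, h1', h2',
      h3', mul_sub, h4]
    module
  have Z1 : ∀ j, QC (1 : K) (d (j + 1)) (f j * f (j + 1) - q⁻¹ • (f (j + 1) * f j)) := fun j =>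
    (((H.df2 j).mul (H.df1 (j + 1))).of_eq (inv_mul_cancel₀ q0)).sub
      ((((H.df1 (j + 1)).mul (H.df2 j)).of_eq (mul_inv_cancel₀ q0)).smul _)
  have Z2 : ∀ j, QC q⁻¹ (d (j + 2)) (f j * f (j + 1) - q⁻¹ • (f (j + 1) * f j)) := fun j =>
    (((H.df0 (j + 2) j (by omega) (by omega)).mul (H.df2 (j + 1))).of_eq (one_mul _)).sub
      ((((H.df2 (j + 1)).mul (H.df0 (j + 2) j (by omega) (by omega))).of_eq (mul_one _)).smul _)
  refine ⟨q0, qm, qp, H.de, H.ed, H.dd, ?_, ?_, ?_, ?_, ?_, ?_⟩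
  · intro i j h h'
    exact (((H.dd _ _).mul (H.df0 i j h h')).smul _).of_eq (one_mul _)
  · intro j
    exact (((H.dd _ _).mul (H.df1 j)).smul _).of_eq (one_mul _)
  · intro j
    exact (((H.dd _ _).mul (H.df2 j)).smul _).of_eq (one_mul _)
  · intro i j h
    refine ((QC.mul (s := 1) (s' := 1) ?_ ?_).smul _).of_eq (one_mul _)
    · exact ((((H.dd _ _).mul (H.df0 _ _ (by omega) (by omega))).smul _).of_eq (one_mul _)).symm1
    · exact ((((H.df0 _ _ (by omega) (by omega)).symm1.mul (H.ff i j h).symm1).smul _).of_eq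
        (one_mul _)).symm1
  · intro j
    rw [key]
    refine QC.smul _ ?_
    refine (QC.mul (s := 1) (s' := q) ?_ ?_).of_eq (one_mul _)
    · exact ((((H.dd (j + 2) (j + 1)).mul (H.df0 (j + 2) j (by omega) (by omega))).smul _).of_eq
        (one_mul _)).symm1
    · refine QC.symm' ?_ q0
      exact (((Z1 j).symm1.mul ((H.s1 j).symm q0)).smul _).of_eq (one_mul _)
  · intro j
    rw [key]
    refine QC.smul _ ?_
    refine (QC.mul (s := q) (s' := (q * q)⁻¹) ?_ ?_).of_eq (by field_simp)
    · refine QC.symm' ?_ q0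
      exact ((((H.dd (j + 2) (j + 2)).mul (H.df2 (j + 1)))).smul _).of_eq (one_mul _)
    · refine QC.symm ?_ (mul_ne_zero q0 q0)
      exact ((QC.symm' (Z2 j) q0).mul (QC.symm' (H.s2 j) q0)).smul _

/-- The inverse change of generators, `f_j = (q - q⁻¹)⁻¹ e_{j+1} x_j`. -/
theorem BD.toNB {q : K} {d e x : ℕ → A} (H : BD q d e x) :
    NB q d e (fun j => (q - q⁻¹)⁻¹ • (e (j + 1) * x j)) := by
  have q0 := H.q0
  set r := (q - q⁻¹)⁻¹ with hr
  have de1 : ∀ i j, QC (1 : K) (d i) (e j) := fun i j => (H.dd i j).inv1 (H.de j) (H.ed j)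
  set c : ℕ → A := fun j => e (j + 1) * (x j * x (j + 1) - x (j + 1) * x j) with hc
  have xe : ∀ j, QC q (x j) (e j) := fun j => by
    simpa using ((H.dx1 j).symm q0).inv (inv_ne_zero q0) (H.de j) (H.ed j)
  have xe' : ∀ j, QC q⁻¹ (x j) (e (j + 1)) := fun j =>
    ((H.dx2 j).symm' q0).inv q0 (H.de _) (H.ed _)
  have xe0 : ∀ i j, i ≠ j → i ≠ j + 1 → QC (1 : K) (x j) (e i) := fun i j h h' =>
    (H.dx0 i j h h').symm1.inv1 (H.de _) (H.ed _)
  have ee : ∀ i j, QC (1 : K) (e i) (e j) := fun i j =>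
    ((de1 j i).symm1.inv1 (H.de j) (H.ed j))
  have key : ∀ j, r • (e (j + 1) * x j) * r • (e (j + 1 + 1) * x (j + 1)) -
      q⁻¹ • (r • (e (j + 1 + 1) * x (j + 1)) * r • (e (j + 1) * x j)) =
      (r * r) • (e (j + 2) * c j) := by
    intro j
    have h1 : ∀ y, x j * (e (j + 2) * y) = e (j + 2) * (x j * y) := fun y => by
      rw [← mul_assoc, QC.one_iff.1 (xe0 (j + 2) j (by omega) (by omega)), mul_assoc]
    have h2 : ∀ y, x (j + 1) * (e (j + 1) * y) = q • (e (j + 1) * (x (j + 1) * y)) := fun y => by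
      rw [← mul_assoc, show x (j + 1) * e (j + 1) = _ from xe (j + 1), smul_mul_assoc, mul_assoc]
    have h3 : ∀ y, e (j + 2) * (e (j + 1) * y) = e (j + 1) * (e (j + 2) * y) := fun y => by
      rw [← mul_assoc, QC.one_iff.1 (ee _ _), mul_assoc]
    simp only [show j + 1 + 1 = j + 2 from rfl, hc, smul_mul_assoc, mul_smul_comm, mul_assoc, h1, h2,
      h3, mul_sub]
    match_scalars <;> field_simp
  have c1 : ∀ j, QC (1 : K) (d (j + 1)) (c j) := fun j =>
    (((de1 _ _).mul ((((H.dx2 j).mul (H.dx1 (j + 1))).of_eq (inv_mul_cancel₀ q0)).sub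
      (((H.dx1 (j + 1)).mul (H.dx2 j)).of_eq (mul_inv_cancel₀ q0))))).of_eq (one_mul _)
  have c2 : ∀ j, QC q⁻¹ (d (j + 2)) (c j) := fun j =>
    ((de1 _ _).mul
      ((((H.dx0 (j + 2) j (by omega) (by omega)).mul (H.dx2 (j + 1))).of_eq (one_mul _)).sub
      (((H.dx2 (j + 1)).mul (H.dx0 (j + 2) j (by omega) (by omega))).of_eq (mul_one _)))).of_eq
      (one_mul _)
  refine ⟨H.de, H.ed, H.dd, ?_, ?_, ?_, ?_, ?_, ?_⟩
  · intro i j h h'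
    exact (((de1 _ _).mul (H.dx0 i j h h')).smul _).of_eq (one_mul _)
  · intro j
    exact (((de1 _ _).mul (H.dx1 j)).smul _).of_eq (one_mul _)
  · intro j
    exact (((de1 _ _).mul (H.dx2 j)).smul _).of_eq (one_mul _)
  · intro i j h
    refine ((QC.mul (s := 1) (s' := 1) ?_ ?_).smul _).of_eq (one_mul _)
    · refine QC.inv1 ?_ (H.de _) (H.ed _)
      exact ((((de1 _ _).mul (H.dx0 _ _ (by omega) (by omega))).smul _).of_eq (one_mul _)).symm1
    · exact ((((xe0 _ _ (by omega) (by omega)).mul (H.xx i j h).symm1).smul _).of_eq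
        (one_mul _)).symm1
  · intro j
    rw [key]
    refine QC.smul _ ?_
    refine (QC.mul (s := 1) (s' := q) ?_ ?_).of_eq (one_mul _)
    · refine QC.inv1 ?_ (H.de _) (H.ed _)
      exact ((((de1 (j + 2) (j + 1)).mul (H.dx0 (j + 2) j (by omega) (by omega))).smul _).of_eq
        (one_mul _)).symm1
    · refine QC.symm' ?_ q0
      exact ((((c1 j).symm1.inv1 (H.de _) (H.ed _)).mul ((H.s1 j).symm q0)).smul _).of_eq
        (one_mul _)
  · intro j
    rw [key]
    refine QC.smul _ ?_
    refine (QC.mul (s := q⁻¹) (s' := 1) ?_ ?_).of_eq (mul_one _)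
    · refine QC.inv (QC.symm' ?_ q0) q0 (H.de _) (H.ed _)
      exact ((((de1 (j + 2) (j + 2)).mul (H.dx2 (j + 1)))).smul _).of_eq (one_mul _)
    · refine QC.symm1 ?_
      exact (((((c2 j).symm' q0).inv q0 (H.de _) (H.ed _)).mul (QC.symm' (H.s2 j) q0)).smul _).of_eq
        (inv_mul_cancel₀ q0)

/-- The defining relations of the subalgebra generated by `G_i^{±1}` and `F_j`, for families
`g`, `gi`, `f` in an arbitrary algebra. -/
structure IsBorel (q : K) (n : ℕ) (g gi : Fin n → A) (f : Fin (n - 1) → A) : Prop where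
  ggi : ∀ i, g i * gi i = 1
  gig : ∀ i, gi i * g i = 1
  gigi : ∀ i j, gi i * gi j = gi j * gi i
  gf : ∀ i j, g i * f j =
    (q ^ (((if i.val = j.val + 1 then 1 else 0) - (if i.val = j.val then 1 else 0)) : ℤ)) •
      (f j * g i)
  ff : ∀ i j : Fin (n - 1), i.val + 1 < j.val → f i * f j = f j * f i
  serre : ∀ i j : Fin (n - 1), i.val + 1 = j.val ∨ j.val + 1 = i.val →
    f i * f i * f j + f j * (f i * f i) = (q + q⁻¹) • (f i * f j * f i)

/-- Extension of a family to all of `ℕ` by `1`. -/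
def extG {n : ℕ} (g : Fin n → A) (i : ℕ) : A := if h : i < n then g ⟨i, h⟩ else 1

/-- Extension of a family to all of `ℕ` by `0`. -/
def extF {n : ℕ} (f : Fin n → A) (i : ℕ) : A := if h : i < n then f ⟨i, h⟩ else 0

theorem extG_val {n : ℕ} (g : Fin n → A) (i : Fin n) : extG g i.val = g i := by
  simp [extG]

theorem extF_val {n : ℕ} (g : Fin n → A) (i : Fin n) : extF g i.val = g i := by
  simp [extF]

theorem QC.one_right {a : A} : QC (1 : K) a 1 := by simp [QC]
theorem QC.one_left {a : A} : QC (1 : K) 1 a := by simp [QC]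

/-- The quantum Serre relation of degree two in `a`, as a `q`-commutation. -/
theorem serre_iff1 {q : K} (q0 : q ≠ 0) (a b : A) :
    QC q a (a * b - q⁻¹ • (b * a)) ↔ a * a * b + b * (a * a) = (q + q⁻¹) • (a * b * a) := by
  unfold QC
  rw [← sub_eq_zero, ← sub_eq_zero (a := _ + _)]
  refine Eq.congr ?_ rfl
  simp only [mul_sub, sub_mul, mul_smul_comm, smul_mul_assoc, mul_assoc]
  match_scalars <;> (field_simp; try ring)

/-- The quantum Serre relation of degree two in `b`, as a `q`-commutation with the same
`q`-commutator of `a` and `b`. -/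
theorem serre_iff2 {q : K} (q0 : q ≠ 0) (a b : A) :
    QC q⁻¹ b (a * b - q⁻¹ • (b * a)) ↔ b * b * a + a * (b * b) = (q + q⁻¹) • (b * a * b) := by
  unfold QC
  rw [← sub_eq_zero, ← sub_eq_zero (a := _ + _), ← neg_eq_zero, ← smul_eq_zero_iff_right q0]
  refine Eq.congr ?_ rfl
  simp only [mul_sub, sub_mul, mul_smul_comm, smul_mul_assoc, mul_assoc]
  match_scalars <;> (field_simp; try ring)

theorem IsBorel.toNB {q : K} (q0 : q ≠ 0) {n : ℕ} {g gi : Fin n → A} {f : Fin (n - 1) → A}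
    (H : IsBorel q n g gi f) : NB q (extG gi) (extG g) (extF f) := by
  have hgf : ∀ (i : Fin n) (j : Fin (n - 1)), QC (q ^ (((if i.val = j.val then 1 else 0) -
      (if i.val = j.val + 1 then 1 else 0)) : ℤ)) (gi i) (f j) := by
    intro i j
    have h : QC (q ^ (_ : ℤ)) (g i) (f j) := H.gf i j
    have h1 := ((h.symm (zpow_ne_zero _ q0)).inv (inv_ne_zero (zpow_ne_zero _ q0))
      (H.ggi i) (H.gig i)).symm (inv_ne_zero (inv_ne_zero (zpow_ne_zero _ q0)))
    refine h1.of_eq ?_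
    rw [inv_inv, ← zpow_neg, neg_sub]
  constructor
  · intro i; unfold extG; split_ifs
    · exact H.gig _
    · exact one_mul 1
  · intro i; unfold extG; split_ifs
    · exact H.ggi _
    · exact one_mul 1
  · intro i j; rw [QC.one_iff]; unfold extG; split_ifs
    · exact H.gigi _ _
    all_goals simp
  · intro i j h h'; unfold extG extF; split_ifs with h1 h2
    · exact (hgf ⟨i, h1⟩ ⟨j, h2⟩).of_eq (by simp [h, h'])
    · exact QC.zero_right
    · exact QC.one_left
    · exact QC.zero_right
  · intro j; unfold extF extG; split_ifs with h1 h2 h2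
    · exact (hgf ⟨j, h1⟩ ⟨j, h2⟩).of_eq (by simp)
    · exact QC.zero_right
    · omega
    · exact QC.zero_right
  · intro j; unfold extF extG; split_ifs with h1 h2 h2
    · exact (hgf ⟨j + 1, h1⟩ ⟨j, h2⟩).of_eq (by simp)
    · exact QC.zero_right
    · omega
    · exact QC.zero_right
  · intro i j h; rw [QC.one_iff]; unfold extF; split_ifs
    · exact H.ff _ _ h
    all_goals simp
  · intro j; rw [serre_iff1 q0]; unfold extF; split_ifs with h1 h2
    · exact H.serre _ _ (Or.inl rfl)
    all_goals simp
  · intro j; rw [serre_iff2 q0]; unfold extF; split_ifs with h1 h2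
    · exact H.serre _ _ (Or.inr rfl)
    all_goals simp

theorem NB.toIsBorel {q : K} (q0 : q ≠ 0) (n : ℕ) {d e f : ℕ → A} (H : NB q d e f) :
    IsBorel q n (fun i => e i) (fun i => d i) (fun j => f j) := by
  constructor
  · intro i; exact H.ed i
  · intro i; exact H.de i
  · intro i j; exact QC.one_iff.1 (H.dd i j)
  · intro i j
    have aux : ∀ s : K, s ≠ 0 → QC s (d i) (f j) → QC s⁻¹ (e i) (f j) := fun s hs h =>
      ((h.symm hs).inv (inv_ne_zero hs) (H.de i) (H.ed i)).symm (inv_ne_zero (inv_ne_zero hs))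
        |>.of_eq (by rw [inv_inv])
    change QC _ _ _
    split_ifs with h1 h2 h2
    · omega
    · simpa [h1] using aux _ (inv_ne_zero q0) (by rw [h1]; exact H.df2 j)
    · simpa [h2] using aux _ q0 (by rw [h2]; exact H.df1 j)
    · simpa using aux _ one_ne_zero (H.df0 _ _ h2 h1)
  · intro i j h; exact QC.one_iff.1 (H.ff _ _ h)
  · rintro i j (h | h)
    · rw [← h]; exact (serre_iff1 q0 _ _).1 (H.s1 i)
    · rw [← h]; exact (serre_iff2 q0 _ _).1 (H.s2 j)

end BorelRelations

/-! ### The function algebra `F_q^P[B_−]` -/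

section FunctionAlgebra

variable {K} {q : K} {n : ℕ}

variable (K q n) in
/-- The quotient map onto `F_q^P[B_−]`. -/
def fqMk : FreeAlgebra K (BmGen n) →ₐ[K] FqBm K q n := RingQuot.mkAlgHom K (BmRel K q n)

theorem fq_rel {a b : FreeAlgebra K (BmGen n)} (h : BmRel K q n a b) :
    fqMk K q n a = fqMk K q n b := RingQuot.mkAlgHom_rel K h

theorem mT_row (i j l : Fin n) (h : j < l) :
    mT K q n i j * mT K q n i l = q • (mT K q n i l * mT K q n i j) := by
  have := fq_rel (BmRel.row (q := q) i j l h)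
  simp only [map_mul, map_smul] at this
  exact this

theorem mT_col (i h l : Fin n) (hlt : i < h) :
    mT K q n i l * mT K q n h l = q • (mT K q n h l * mT K q n i l) := by
  have := fq_rel (BmRel.col (q := q) i h l hlt)
  simp only [map_mul, map_smul] at this
  exact this

theorem mT_mix (i j l m : Fin n) (h1 : i < j) (h2 : l < m) :
    mT K q n i l * mT K q n j m - mT K q n j m * mT K q n i l =
      (q - q⁻¹) • (mT K q n i m * mT K q n j l) := by
  have := fq_rel (BmRel.mix (q := q) i j l m h1 h2)
  simp only [map_mul, map_smul, map_sub] at this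
  exact this

theorem mT_tri (i j : Fin n) (h : i < j) : mT K q n i j = 0 := by
  have := fq_rel (BmRel.tri (q := q) i j h)
  simp only [map_zero] at this
  exact this

theorem mT_det1 : ((List.finRange n).map (fun i => mT K q n i i)).prod * mDinv K q n = 1 := by
  have := fq_rel (BmRel.detinv1 (K := K) (q := q) (n := n))
  rw [map_mul, map_list_prod, List.map_map, map_one] at this
  exact this

theorem mT_det2 : mDinv K q n * ((List.finRange n).map (fun i => mT K q n i i)).prod = 1 := by
  have := fq_rel (BmRel.detinv2 (K := K) (q := q) (n := n))
  rw [map_mul, map_list_prod, List.map_map, map_one] at this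
  exact this

theorem mT_diag_comm (i j : Fin n) : Commute (mT K q n i i) (mT K q n j j) := by
  have aux : ∀ i j : Fin n, i < j → Commute (mT K q n i i) (mT K q n j j) := fun i j h => by
    have := mT_mix (K := K) (q := q) i j i j h h
    rwa [mT_tri i j h, zero_mul, smul_zero, sub_eq_zero] at this
  rcases lt_trichotomy i j with h | rfl | h
  · exact aux _ _ h
  · exact Commute.refl _
  · exact (aux _ _ h).symm

theorem isUnit_of_list_prod {M ι : Type*} [Monoid M] (a : ι → M) (hc : ∀ i j, Commute (a i) (a j))
    (l : List ι) (hl : IsUnit (l.map a).prod) : ∀ i ∈ l, IsUnit (a i) := by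
  induction l with
  | nil => simp
  | cons b l ih =>
    rw [List.map_cons, List.prod_cons] at hl
    have hb : Commute (a b) (l.map a).prod := Commute.list_prod_right _ _ (by
      intro y hy
      obtain ⟨j, _, rfl⟩ := List.mem_map.1 hy
      exact hc _ _)
    rw [hb.isUnit_mul_iff] at hl
    intro i hi
    rcases List.mem_cons.1 hi with rfl | hi
    · exact hl.1
    · exact ih hl.2 i hi

theorem mT_diag_isUnit (i : Fin n) : IsUnit (mT K q n i i) :=
  isUnit_of_list_prod (fun i => mT K q n i i) mT_diag_comm (List.finRange n)
    ⟨⟨_, _, mT_det1, mT_det2⟩, rfl⟩ i (List.mem_finRange i)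

variable (K q n) in
/-- `t_{ii}⁻¹` in `F_q^P[B_−]`. -/
def fqG (i : Fin n) : FqBm K q n := Ring.inverse (mT K q n i i)

theorem mT_fqG (i : Fin n) : mT K q n i i * fqG K q n i = 1 :=
  Ring.mul_inverse_cancel _ (mT_diag_isUnit i)

theorem fqG_mT (i : Fin n) : fqG K q n i * mT K q n i i = 1 :=
  Ring.inverse_mul_cancel _ (mT_diag_isUnit i)

variable (K q n) in
/-- The image `(q - q⁻¹)⁻¹ t_{j+1,j+1}⁻¹ t_{j+1,j}` of `F_j` in `F_q^P[B_−]`. -/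
def fqF (j : Fin (n - 1)) : FqBm K q n :=
  (q - q⁻¹)⁻¹ • (fqG K q n (idxhi j) * mT K q n (idxhi j) (idxlo j))

/-- The diagonal and subdiagonal entries satisfy the Borel relations; the Serre relations are the
`q`-commutations of `t_{j+1,j}` and `t_{j+2,j+1}` with `t_{j+2,j}`. -/
theorem fq_BD (q0 : q ≠ 0) (qm : q - q⁻¹ ≠ 0) (qp : q + q⁻¹ ≠ 0) :
    BD q (extG fun i => mT K q n i i) (extG (fqG K q n))
      (extF fun j => mT K q n (idxhi j) (idxlo j)) := by
  have key : ∀ (j : ℕ) (h : j + 1 < n - 1),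
      extG (fqG K q n) (j + 1) * (mT K q n (idxhi ⟨j, by omega⟩) (idxlo ⟨j, by omega⟩) *
        mT K q n (idxhi ⟨j + 1, h⟩) (idxlo ⟨j + 1, h⟩) -
        mT K q n (idxhi ⟨j + 1, h⟩) (idxlo ⟨j + 1, h⟩) *
        mT K q n (idxhi ⟨j, by omega⟩) (idxlo ⟨j, by omega⟩)) =
      (q - q⁻¹) • mT K q n (idxhi ⟨j + 1, h⟩) (idxlo ⟨j, by omega⟩) := by
    intro j h
    have hm := mT_mix (K := K) (q := q) (n := n) (idxhi ⟨j, by omega⟩) (idxhi ⟨j + 1, h⟩)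
      (idxlo ⟨j, by omega⟩) (idxlo ⟨j + 1, h⟩) (by simp [idxhi]) (by simp [idxlo])
    rw [hm]
    have : extG (fqG K q n) (j + 1) = fqG K q n (idxhi ⟨j, by omega⟩) := by
      exact extG_val (fqG K q n) (idxhi ⟨j, by omega⟩)
    rw [this, mul_smul_comm, ← mul_assoc]
    have : (idxlo ⟨j + 1, h⟩ : Fin n) = idxhi ⟨j, by omega⟩ := rfl
    rw [this, fqG_mT, one_mul]
  refine ⟨q0, qm, qp, ?_, ?_, ?_, ?_, ?_, ?_, ?_, ?_, ?_⟩
  · intro i; unfold extG; split_ifs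
    · exact mT_fqG _
    · exact one_mul 1
  · intro i; unfold extG; split_ifs
    · exact fqG_mT _
    · exact one_mul 1
  · intro i j; rw [QC.one_iff]; unfold extG; split_ifs
    · exact mT_diag_comm _ _
    all_goals simp
  · intro i j h h'; unfold extG extF; split_ifs with h1 h2
    · rw [QC.one_iff, ← sub_eq_zero]
      rcases Nat.lt_or_ge i j with hij | hij
      · rw [mT_mix _ _ _ _ (by simp only [idxhi, Fin.mk_lt_mk]; omega)
          (by simpa only [idxlo, Fin.mk_lt_mk] using hij),
          mT_tri _ _ (by simpa only [idxlo, Fin.mk_lt_mk] using hij), zero_mul, smul_zero]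
      · rw [← neg_eq_zero, neg_sub, mT_mix _ _ _ _ (by simp only [idxhi, Fin.mk_lt_mk]; omega)
          (by simp only [idxlo, Fin.mk_lt_mk]; omega),
          mT_tri (idxhi _) _ (by simp only [idxhi, Fin.mk_lt_mk]; omega), zero_mul, smul_zero]
    · exact QC.zero_right
    · exact QC.one_left
    · exact QC.zero_right
  · intro j; unfold extF extG; split_ifs with h1 h2 h2
    · exact mT_col (idxlo ⟨j, h2⟩) (idxhi ⟨j, h2⟩) (idxlo ⟨j, h2⟩) (by simp [idxlo, idxhi])
    · exact QC.zero_right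
    · omega
    · exact QC.zero_right
  · intro j; unfold extF extG; split_ifs with h1 h2 h2
    · refine QC.symm ?_ q0
      exact mT_row (idxhi ⟨j, h2⟩) (idxlo ⟨j, h2⟩) (idxhi ⟨j, h2⟩) (by simp [idxlo, idxhi])
    · exact QC.zero_right
    · omega
    · exact QC.zero_right
  · intro i j h; unfold extF; split_ifs with h1 h2
    · rw [QC.one_iff, ← sub_eq_zero, mT_mix _ _ _ _ (by simp only [idxhi, Fin.mk_lt_mk]; omega)
        (by simp only [idxlo, Fin.mk_lt_mk]; omega),
        mT_tri (idxhi _) _ (by simp only [idxhi, idxlo, Fin.mk_lt_mk]; omega), zero_mul, smul_zero]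
    · exact QC.zero_right
    · exact QC.zero_left
    · exact QC.zero_left
  · intro j
    by_cases h : j + 1 < n - 1
    · have h' : j < n - 1 := by omega
      simp only [extF, h, h', dif_pos]
      rw [key j h]
      exact QC.smul _ (mT_col _ _ _ (by simp [idxhi]))
    · simp only [extF, h, dif_neg, not_false_eq_true, mul_zero, zero_mul, sub_zero]
      exact QC.zero_right
  · intro j
    by_cases h : j + 1 < n - 1
    · have h' : j < n - 1 := by omega
      simp only [extF, h, h', dif_pos]
      rw [key j h]
      exact QC.smul _ (QC.symm (mT_row _ _ _ (by simp [idxlo])) q0)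
    · simp only [extF, h, dif_neg, not_false_eq_true]
      exact QC.zero_left

theorem fq_isBorel (q0 : q ≠ 0) (qm : q - q⁻¹ ≠ 0) (qp : q + q⁻¹ ≠ 0) :
    IsBorel q n (fqG K q n) (fun i => mT K q n i i) (fqF K q n) := by
  have := (fq_BD (n := n) q0 qm qp).toNB.toIsBorel q0 n
  simp only [extG_val, extF_val] at this
  convert this using 2 with j
  rw [fqF, show j.val + 1 = (idxhi j : Fin n).val from rfl, extG_val]

/-- The entries `t_{ij}` with `i ≥ j` are generated by the diagonal, its inverses and the
subdiagonal. -/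
theorem fq_eq_top (qm : q - q⁻¹ ≠ 0) (S : Subalgebra K (FqBm K q n))
    (h1 : ∀ i, mT K q n i i ∈ S) (h2 : ∀ i, fqG K q n i ∈ S)
    (h3 : ∀ j : Fin (n - 1), mT K q n (idxhi j) (idxlo j) ∈ S) : S = ⊤ := by
  have hT : ∀ (i : ℕ) (hi : i < n) (j : ℕ) (hj : j < n), mT K q n ⟨i, hi⟩ ⟨j, hj⟩ ∈ S := by
    intro i
    induction i with
    | zero =>
      intro hi j hj
      rcases Nat.eq_zero_or_pos j with rfl | h
      · exact h1 _
      · rw [mT_tri _ _ (by simpa using h)]; exact S.zero_mem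
    | succ i ih =>
      intro hi j hj
      rcases lt_trichotomy j i with h | rfl | h
      · have hx := h3 ⟨i, by omega⟩
        have hm := mT_mix (K := K) (q := q) (n := n) ⟨i, by omega⟩ ⟨i + 1, hi⟩ ⟨j, hj⟩
          ⟨i, by omega⟩ (by simp) (by simpa using h)
        have : mT K q n ⟨i + 1, hi⟩ ⟨j, hj⟩ = (q - q⁻¹)⁻¹ • (fqG K q n ⟨i, by omega⟩ *
            ((q - q⁻¹) • (mT K q n ⟨i, by omega⟩ ⟨i, by omega⟩ * mT K q n ⟨i + 1, hi⟩ ⟨j, hj⟩))) := by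
          rw [mul_smul_comm, smul_smul, inv_mul_cancel₀ qm, one_smul, ← mul_assoc, fqG_mT, one_mul]
        rw [this, ← hm]
        exact S.smul_mem (S.mul_mem (h2 _) (S.sub_mem (S.mul_mem (ih _ _ _) hx)
          (S.mul_mem hx (ih _ _ _)))) _
      · exact h3 ⟨j, by omega⟩
      · rcases Nat.lt_or_ge (i + 1) j with h' | h'
        · rw [mT_tri _ _ (by simpa using h')]; exact S.zero_mem
        · obtain rfl : j = i + 1 := by omega
          exact h1 _
  have hD : mDinv K q n ∈ S := by
    have : mDinv K q n = ((List.finRange n).reverse.map (fqG K q n)).prod := by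
      have h : ∀ l : List (Fin n), (l.reverse.map (fqG K q n)).prod *
          (l.map (fun i => mT K q n i i)).prod = 1 := by
        intro l
        induction l with
        | nil => simp
        | cons a l ih =>
          rw [List.reverse_cons, List.map_append, List.prod_append, List.map_cons, List.prod_cons,
            List.map_cons, List.prod_cons, List.map_nil, List.prod_nil, mul_one, mul_assoc,
            ← mul_assoc (fqG K q n a), fqG_mT, one_mul, ih]
      rw [← one_mul (mDinv K q n), ← h (List.finRange n), mul_assoc, mT_det1, mul_one]
    rw [this]
    refine S.list_prod_mem ?_
    intro y hy
    obtain ⟨i, _, rfl⟩ := List.mem_map.1 hy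
    exact h2 i
  rw [eq_top_iff]
  rintro x -
  obtain ⟨y, rfl⟩ := RingQuot.mkAlgHom_surjective K (BmRel K q n) x
  induction y using FreeAlgebra.induction with
  | grade0 r => rw [AlgHom.commutes]; exact S.algebraMap_mem r
  | grade1 g =>
    cases g with
    | t i j => exact hT i.val i.isLt j.val j.isLt
    | dinv => exact hD
  | mul a b ha hb => rw [map_mul]; exact S.mul_mem ha hb
  | add a b ha hb => rw [map_add]; exact S.add_mem ha hb

/-- `F_q^P[B_−]` has the universal property of the algebra presented by the relations of
`IsBorel`: the quantum root vectors satisfy the defining relations of the `t_{ij}`. -/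
theorem fq_lift {A : Type*} [Ring A] [Algebra K A] (q0 : q ≠ 0) (qm : q - q⁻¹ ≠ 0)
    (qp : q + q⁻¹ ≠ 0) {g gi : Fin n → A} {f : Fin (n - 1) → A} (H : IsBorel q n g gi f) :
    ∃ φ : FqBm K q n →ₐ[K] A, (∀ i, φ (mT K q n i i) = gi i) ∧ (∀ i, φ (fqG K q n i) = g i) ∧
      ∀ j, φ (fqF K q n j) = f j := by
  have B := (H.toNB q0).toBD q0 qm qp
  set d : ℕ → A := extG gi with hd
  set e : ℕ → A := extG g with he
  set x : ℕ → A := fun j => (q - q⁻¹) • (d (j + 1) * extF f j) with hx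
  set T : ℕ → ℕ → A := tt q d e x with hT
  let gen : BmGen n → A := fun
    | BmGen.t i j => T i j
    | BmGen.dinv => ((List.finRange n).reverse.map (fun i : Fin n => e i)).prod
  have gt : ∀ i j, FreeAlgebra.lift K gen (mtt K n i j) = T i j := fun i j => by
    rw [mtt, FreeAlgebra.lift_ι_apply]
  have gdi : FreeAlgebra.lift K gen (mdinv K n) =
      ((List.finRange n).reverse.map (fun i : Fin n => e i)).prod := by
    rw [mdinv, FreeAlgebra.lift_ι_apply]
  have gdet : FreeAlgebra.lift K gen (((List.finRange n).map (fun i => mtt K n i i)).prod) =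
      ((List.finRange n).map (fun i : Fin n => d i)).prod := by
    rw [map_list_prod, List.map_map]
    congr 2
    funext i
    rw [Function.comp_apply, gt, hT, tt_self]
  have hrel : ∀ ⦃a b⦄, BmRel K q n a b → FreeAlgebra.lift K gen a = FreeAlgebra.lift K gen b := by
    intro a b h
    cases h with
    | row i j l h => simp only [map_mul, map_smul, gt]; exact B.row h
    | col i h l hlt => simp only [map_mul, map_smul, gt]; exact B.col hlt
    | cross i j l m h1 h2 =>
      simp only [map_mul, gt]; exact (QC.one_iff.1 (B.nested h2 h1)).symm
    | mix i j l m h1 h2 =>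
      simp only [map_mul, map_smul, map_sub, gt]; exact B.mix h1 h2
    | tri i j h => rw [gt, map_zero]; exact tt_lt _ _ _ _ h
    | detinv1 =>
      rw [map_mul, gdet, gdi, map_one]
      generalize List.finRange n = l
      induction l with
      | nil => simp
      | cons a l ih =>
        rw [List.reverse_cons, List.map_append, List.prod_append, List.map_cons, List.prod_cons,
          List.map_cons, List.prod_cons, List.map_nil, List.prod_nil, mul_one, mul_assoc,
          ← mul_assoc _ _ (e a), ih, one_mul, B.de]
    | detinv2 =>
      rw [map_mul, gdet, gdi, map_one]
      generalize List.finRange n = l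
      induction l with
      | nil => simp
      | cons a l ih =>
        rw [List.reverse_cons, List.map_append, List.prod_append, List.map_cons, List.prod_cons,
          List.map_cons, List.prod_cons, List.map_nil, List.prod_nil, mul_one, mul_assoc,
          ← mul_assoc (e a), B.ed, one_mul, ih]
  let φ : FqBm K q n →ₐ[K] A := RingQuot.liftAlgHom K ⟨FreeAlgebra.lift K gen, hrel⟩
  have hφ : ∀ i j, φ (mT K q n i j) = T i j := fun i j => by
    rw [← gt i j]
    exact RingQuot.liftAlgHom_mkAlgHom_apply K _ hrel _
  have h1 : ∀ i, φ (mT K q n i i) = gi i := fun i => by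
    rw [hφ, hT, tt_self, hd, extG_val]
  have h2 : ∀ i, φ (fqG K q n i) = g i := fun i => by
    have := congrArg φ (fqG_mT (K := K) (q := q) i)
    rw [map_mul, h1, map_one] at this
    rw [← mul_one (φ _), ← H.gig i, ← mul_assoc, this, one_mul]
  refine ⟨φ, h1, h2, fun j => ?_⟩
  have h3 : φ (mT K q n (idxhi j) (idxlo j)) = (q - q⁻¹) • (gi (idxhi j) * f j) := by
    rw [hφ, hT, show ((idxhi j : Fin n) : ℕ) = (idxlo j : Fin n).val + 1 from rfl, tt_succ, hx]
    simp only
    rw [show ((idxlo j : Fin n) : ℕ) = j.val from rfl, extF_val, hd,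
      show j.val + 1 = (idxhi j : Fin n).val from rfl, extG_val]
  rw [fqF, map_smul, map_mul, h2, h3, mul_smul_comm, smul_smul, inv_mul_cancel₀ qm, one_smul,
    ← mul_assoc, H.ggi, one_mul]

theorem mT_sub (qm : q - q⁻¹ ≠ 0) (j : Fin (n - 1)) : mT K q n (idxhi j) (idxlo j) =
    (q - q⁻¹) • (mT K q n (idxhi j) (idxhi j) * fqF K q n j) := by
  rw [fqF, mul_smul_comm, smul_smul, mul_inv_cancel₀ qm, one_smul, ← mul_assoc, mT_fqG, one_mul]

theorem fq_eq_top' (qm : q - q⁻¹ ≠ 0) (S : Subalgebra K (FqBm K q n))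
    (h1 : ∀ i, mT K q n i i ∈ S) (h2 : ∀ i, fqG K q n i ∈ S)
    (h3 : ∀ j : Fin (n - 1), fqF K q n j ∈ S) : S = ⊤ :=
  fq_eq_top qm S h1 h2 fun j => by
    rw [mT_sub qm]; exact S.smul_mem (S.mul_mem (h1 _) (h3 j)) _

theorem fq_hom_ext {A : Type*} [Semiring A] [Algebra K A] (qm : q - q⁻¹ ≠ 0)
    {φ ψ : FqBm K q n →ₐ[K] A}
    (h1 : ∀ i, φ (mT K q n i i) = ψ (mT K q n i i)) (h2 : ∀ i, φ (fqG K q n i) = ψ (fqG K q n i))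
    (h3 : ∀ j : Fin (n - 1), φ (fqF K q n j) = ψ (fqF K q n j)) : φ = ψ := by
  have := fq_eq_top' qm (AlgHom.equalizer φ ψ) h1 h2 h3
  ext x
  have hx : x ∈ AlgHom.equalizer φ ψ := this ▸ Algebra.mem_top
  exact hx

end FunctionAlgebra

/-! ### Torus relations and linearised Serre relations -/

section TorusRelations

variable {K} {A : Type*} [Ring A] [Algebra K A]

/-- The relations of `IsBorel` not involving two of the `f_j`. With `q⁻¹` in place of `q` these
are the relations between the `G_i^{±1}` and the `E_j`. -/
structure IsTorus (q : K) (n : ℕ) (g gi : Fin n → A) (f : Fin (n - 1) → A) : Prop where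
  ggi : ∀ i, g i * gi i = 1
  gig : ∀ i, gi i * g i = 1
  gigi : ∀ i j, gi i * gi j = gi j * gi i
  gf : ∀ i j, g i * f j =
    (q ^ (((if i.val = j.val + 1 then 1 else 0) - (if i.val = j.val then 1 else 0)) : ℤ)) •
      (f j * g i)

theorem IsBorel.toIsTorus {q : K} {n : ℕ} {g gi : Fin n → A} {f : Fin (n - 1) → A}
    (H : IsBorel q n g gi f) : IsTorus q n g gi f :=
  ⟨H.ggi, H.gig, H.gigi, H.gf⟩

theorem IsBorel.map {q : K} {n : ℕ} {g gi : Fin n → A} {f : Fin (n - 1) → A}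
    (H : IsBorel q n g gi f) {C : Type*} [Ring C] [Algebra K C] (φ : A →ₐ[K] C) :
    IsBorel q n (fun i => φ (g i)) (fun i => φ (gi i)) (fun j => φ (f j)) := by
  constructor
  · intro i; rw [← map_mul, H.ggi, map_one]
  · intro i; rw [← map_mul, H.gig, map_one]
  · intro i j; rw [← map_mul, H.gigi, map_mul]
  · intro i j; rw [← map_mul, H.gf, map_smul, map_mul]
  · intro i j h; rw [← map_mul, H.ff i j h, map_mul]
  · intro i j h
    have := congrArg φ (H.serre i j h)
    simpa only [map_mul, map_add, map_smul] using this

/-- `r (K_i - K_i⁻¹)` with `K_i = G_i G_{i+1}⁻¹`. -/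
def hop {n : ℕ} (r : K) (g gi : Fin n → A) (i : Fin (n - 1)) : A :=
  r • (g (idxlo i) * gi (idxhi i) - gi (idxlo i) * g (idxhi i))

/-- The linearisation of the Serre relation in its repeated variable holds for a grouplike `u`
that `q`-commutes with both variables. -/
theorem ser1 {s : K} (hs : s ≠ 0) {u a b : A} (ha : QC (s * s) u a) (hb : QC s⁻¹ u b) :
    (u * a + a * u) * b + b * (u * a + a * u) = (s + s⁻¹) • (u * b * a + a * b * u) := by
  simp only [add_mul, mul_add, mul_assoc, show u * a = _ from ha, show u * b = _ from hb,
    mul_smul_comm, smul_mul_assoc]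
  match_scalars <;> (field_simp; try ring)

/-- The linearisation of the Serre relation in its other variable, likewise. -/
theorem ser2 {s : K} (hs : s ≠ 0) {u a : A} (ha : QC s⁻¹ u a) :
    a * a * u + u * (a * a) = (s + s⁻¹) • (a * u * a) := by
  have ha' : ∀ y, u * (a * y) = s⁻¹ • (a * (u * y)) := fun y => by
    rw [← mul_assoc, show u * a = _ from ha, smul_mul_assoc, mul_assoc]
  simp only [mul_assoc, show u * a = _ from ha, ha', mul_smul_comm]
  match_scalars
  field_simp

section

variable {q : K} {n : ℕ} {g gi : Fin n → A} {f : Fin (n - 1) → A}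

theorem IsTorus.qg (H : IsTorus q n g gi f) (i : Fin n) (j : Fin (n - 1)) :
    QC (q ^ (((if i.val = j.val + 1 then 1 else 0) - (if i.val = j.val then 1 else 0)) : ℤ))
      (g i) (f j) := H.gf i j

theorem IsTorus.qgi (H : IsTorus q n g gi f) (q0 : q ≠ 0) (i : Fin n) (j : Fin (n - 1)) :
    QC (q ^ (((if i.val = j.val then 1 else 0) - (if i.val = j.val + 1 then 1 else 0)) : ℤ))
      (gi i) (f j) := by
  have h1 := (((H.qg i j).symm (zpow_ne_zero _ q0)).inv (inv_ne_zero (zpow_ne_zero _ q0))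
    (H.ggi i) (H.gig i)).symm (inv_ne_zero (inv_ne_zero (zpow_ne_zero _ q0)))
  refine h1.of_eq ?_
  rw [inv_inv, ← zpow_neg, neg_sub]

theorem IsTorus.ggi_comm (H : IsTorus q n g gi f) (i j : Fin n) : QC (1 : K) (g i) (gi j) :=
  (((QC.one_iff.2 (H.gigi i j)).symm1).inv1 (H.gig i) (H.ggi i)).symm1

theorem IsTorus.gg_comm (H : IsTorus q n g gi f) (i j : Fin n) : QC (1 : K) (g i) (g j) :=
  (H.ggi_comm i j).inv1 (H.gig j) (H.ggi j)

theorem IsTorus.hop_g (H : IsTorus q n g gi f) (r : K) (k : Fin n) (i : Fin (n - 1)) :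
    QC (1 : K) (g k) (hop r g gi i) :=
  ((((H.gg_comm _ _).mul (H.ggi_comm _ _)).sub ((H.ggi_comm _ _).mul (H.gg_comm _ _))).smul
    _).of_eq (one_mul _)

theorem IsTorus.hop_comm (H : IsTorus q n g gi f) (q0 : q ≠ 0) (r : K) (i j : Fin (n - 1))
    (h : i.val + 1 < j.val ∨ j.val + 1 < i.val) : QC (1 : K) (f j) (hop r g gi i) := by
  have e1 : ¬ i.val = j.val + 1 := by omega
  have e2 : ¬ i.val = j.val := by omega
  have e3 : ¬ i.val + 1 = j.val := by omega
  refine QC.of_eq (QC.smul _ (QC.sub (s := 1 * 1) (QC.mul ?_ ?_) (QC.mul ?_ ?_))) (one_mul _)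
  · refine ((H.qg _ _).of_eq ?_).symm1; simp [idxlo, e1, e2]
  · refine ((H.qgi q0 _ _).of_eq ?_).symm1; simp [idxhi, e2, e3]
  · refine ((H.qgi q0 _ _).of_eq ?_).symm1; simp [idxlo, e1, e2]
  · refine ((H.qg _ _).of_eq ?_).symm1; simp [idxhi, e2, e3]

theorem QC.mul_left {s s' : K} {a b c : A} (h : QC s a c) (h' : QC s' b c) :
    QC (s * s') (a * b) c := by
  unfold QC at *
  rw [mul_assoc, h', mul_smul_comm, ← mul_assoc, h, smul_mul_assoc, smul_smul, mul_assoc,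
    mul_comm s]

theorem IsTorus.k_adj (H : IsTorus q n g gi f) (q0 : q ≠ 0) (i j : Fin (n - 1))
    (h : i.val + 1 = j.val ∨ j.val + 1 = i.val) :
    QC q⁻¹⁻¹ (g (idxlo i) * gi (idxhi i)) (f j) := by
  refine ((H.qg (idxlo i) j).mul_left (H.qgi q0 (idxhi i) j)).of_eq ?_
  have e1 : ¬ i.val = j.val := by omega
  rcases h with h | h
  · have e2 : ¬ i.val = j.val + 1 := by omega
    simp [idxlo, idxhi, e1, e2, h]
  · have e2 : ¬ i.val + 1 = j.val := by omega
    simp [idxlo, idxhi, e1, e2, h]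

theorem IsTorus.ki_adj (H : IsTorus q n g gi f) (q0 : q ≠ 0) (i j : Fin (n - 1))
    (h : i.val + 1 = j.val ∨ j.val + 1 = i.val) :
    QC q⁻¹ (gi (idxlo i) * g (idxhi i)) (f j) := by
  refine ((H.qgi q0 (idxlo i) j).mul_left (H.qg (idxhi i) j)).of_eq ?_
  have e1 : ¬ i.val = j.val := by omega
  rcases h with h | h
  · have e2 : ¬ i.val = j.val + 1 := by omega
    simp [idxlo, idxhi, e1, e2, h]
  · have e2 : ¬ i.val + 1 = j.val := by omega
    simp [idxlo, idxhi, e1, e2, h]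

theorem IsTorus.k_self (H : IsTorus q n g gi f) (q0 : q ≠ 0) (i : Fin (n - 1)) :
    QC (q⁻¹ * q⁻¹) (g (idxlo i) * gi (idxhi i)) (f i) :=
  ((H.qg (idxlo i) i).mul_left (H.qgi q0 (idxhi i) i)).of_eq (by simp [idxlo, idxhi])

theorem IsTorus.ki_self (H : IsTorus q n g gi f) (q0 : q ≠ 0) (i : Fin (n - 1)) :
    QC (q * q) (gi (idxlo i) * g (idxhi i)) (f i) :=
  ((H.qgi q0 (idxlo i) i).mul_left (H.qg (idxhi i) i)).of_eq (by simp [idxlo, idxhi])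

theorem IsTorus.hop_serre1 (H : IsTorus q n g gi f) (q0 : q ≠ 0) (r : K) (i j : Fin (n - 1))
    (h : i.val + 1 = j.val ∨ j.val + 1 = i.val) :
    (hop r g gi i * f i + f i * hop r g gi i) * f j +
      f j * (hop r g gi i * f i + f i * hop r g gi i) =
      (q + q⁻¹) • (hop r g gi i * f j * f i + f i * f j * hop r g gi i) := by
  have s1 := ser1 (inv_ne_zero q0) (H.k_self q0 i) (H.k_adj q0 i j h)
  have s2 := ser1 q0 (H.ki_self q0 i) (H.ki_adj q0 i j h)
  rw [inv_inv, add_comm q⁻¹ q] at s1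
  unfold hop
  generalize g (idxlo i) * gi (idxhi i) = u at *
  generalize gi (idxlo i) * g (idxhi i) = v at *
  have := congrArg (r • ·) (congrArg₂ (· - ·) s1 s2)
  convert this using 1
  · simp only [add_mul, mul_add, sub_mul, mul_sub, smul_mul_assoc, mul_smul_comm]; module
  · simp only [sub_mul, mul_sub, smul_mul_assoc, mul_smul_comm]; module

theorem IsTorus.hop_serre2 (H : IsTorus q n g gi f) (q0 : q ≠ 0) (r : K) (i j : Fin (n - 1))
    (h : i.val + 1 = j.val ∨ j.val + 1 = i.val) :
    f i * f i * hop r g gi j + hop r g gi j * (f i * f i) =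
      (q + q⁻¹) • (f i * hop r g gi j * f i) := by
  have s1 := ser2 (inv_ne_zero q0) (H.k_adj q0 j i h.symm)
  have s2 := ser2 q0 (H.ki_adj q0 j i h.symm)
  rw [inv_inv, add_comm q⁻¹ q] at s1
  unfold hop
  generalize g (idxlo j) * gi (idxhi j) = u at *
  generalize gi (idxlo j) * g (idxhi j) = v at *
  have := congrArg (r • ·) (congrArg₂ (· - ·) s1 s2)
  convert this using 1
  · simp only [sub_mul, mul_sub, smul_mul_assoc, mul_smul_comm]; module
  · simp only [sub_mul, mul_sub, smul_mul_assoc, mul_smul_comm]; module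

end

end TorusRelations

/-! ### The operators `E_i` on `F_q^P[B_−]` -/

section VermaAction

variable {K}

section Mat

variable {A : Type*} [Ring A] [Algebra K A]

/-- An upper triangular `2 × 2` matrix. -/
def mat2 (a b d : A) : Matrix (Fin 2) (Fin 2) A := !![a, b; 0, d]

theorem mat2_mul (a b d a' b' d' : A) :
    mat2 a b d * mat2 a' b' d' = mat2 (a * a') (a * b' + b * d') (d * d') := by
  simp [mat2]

theorem mat2_add (a b d a' b' d' : A) :
    mat2 a b d + mat2 a' b' d' = mat2 (a + a') (b + b') (d + d') := by
  ext i j; fin_cases i <;> fin_cases j <;> simp [mat2]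

theorem mat2_smul (r : K) (a b d : A) : r • mat2 a b d = mat2 (r • a) (r • b) (r • d) := by
  ext i j; fin_cases i <;> fin_cases j <;> simp [mat2]

theorem mat2_one : (1 : Matrix (Fin 2) (Fin 2) A) = mat2 1 0 1 := by
  ext i j; fin_cases i <;> fin_cases j <;> simp [mat2]

/-- The pairing of the weight `ε_k` with the `i`-th simple root `ε_i - ε_{i+1}`: the exponent of `q`
with which `G_k` commutes past `E_i`. -/
def wt {n : ℕ} (i : Fin (n - 1)) (k : Fin n) : ℤ :=
  (if k.val = i.val then 1 else 0) - (if k.val = i.val + 1 then 1 else 0)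

/-- The Borel relations are satisfied by the matrices `(σ(x), D(x); 0, x)`, `x` running over the
Borel generators, where `σ` rescales the torus and fixes the `F_j`, while `D` kills the torus and
sends `F_j` to `δ_{ij} r (K_i - K_i⁻¹)`. -/
theorem IsBorel.twist {q : K} {n : ℕ} {g gi : Fin n → A} {f : Fin (n - 1) → A}
    (H : IsBorel q n g gi f) (q0 : q ≠ 0) (r : K) (i : Fin (n - 1)) :
    IsBorel q n (fun k => mat2 (q ^ (-wt i k) • g k) 0 (g k))
      (fun k => mat2 (q ^ (wt i k) • gi k) 0 (gi k))
      (fun j => mat2 (f j) (if i = j then hop r g gi i else 0) (f j)) := by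
  have T := H.toIsTorus
  constructor
  · intro k
    simp only [mat2_mul, mat2_one, smul_mul_smul_comm, H.ggi, mul_zero, zero_mul, add_zero,
      zpow_neg, inv_mul_cancel₀ (zpow_ne_zero _ q0), one_smul]
  · intro k
    simp only [mat2_mul, mat2_one, smul_mul_smul_comm, H.gig, mul_zero, zero_mul, add_zero,
      zpow_neg, mul_inv_cancel₀ (zpow_ne_zero _ q0), one_smul]
  · intro k l
    simp only [mat2_mul, smul_mul_smul_comm, H.gigi k l, mul_zero, zero_mul, add_zero,
      mul_comm (q ^ wt i k)]
  · intro k j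
    simp only [mat2_mul, mat2_smul, mul_zero, zero_mul, add_zero, zero_add, smul_mul_assoc,
      mul_smul_comm, H.gf k j]
    congr 1
    · rw [smul_comm]
    · by_cases h : i = j
      · subst h
        rw [if_pos rfl, show g k * _ = _ from QC.one_iff.1 (T.hop_g r k i), wt, neg_sub]
      · simp only [if_neg h, mul_zero, zero_mul, smul_zero]
  · intro j l h
    simp only [mat2_mul, H.ff j l h]
    congr 1
    by_cases h1 : i = j
    · subst h1
      have h2 : i ≠ l := by rintro rfl; omega
      simp [h2, QC.one_iff.1 (T.hop_comm q0 r i l (Or.inl h))]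
    · by_cases h2 : i = l
      · subst h2
        simp [h1, QC.one_iff.1 (T.hop_comm q0 r i j (Or.inr h))]
      · simp [h1, h2]
  · intro j l h
    simp only [mat2_mul, mat2_smul, mat2_add, H.serre j l h]
    congr 1
    by_cases h1 : i = j
    · subst h1
      have h2 : i ≠ l := by rintro rfl; omega
      have := T.hop_serre1 q0 r i l h
      simp only [if_neg h2, if_true, mul_zero, zero_mul, zero_add, add_zero]
      rw [add_comm (f i * _) (_ * f i), add_comm (f i * f l * _)]
      exact this
    · by_cases h2 : i = l
      · subst h2
        have := T.hop_serre2 q0 r j i h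
        simpa only [if_neg h1, if_true, mul_zero, zero_mul, zero_add, add_zero] using this
      · simp [h1, h2]

end Mat

variable {q : K} {n : ℕ}

variable (K q n) in
/-- `(q - q⁻¹)⁻¹ (K_i - K_i⁻¹)` in `F_q^P[B_−]`. -/
def fqH (i : Fin (n - 1)) : FqBm K q n :=
  hop (q - q⁻¹)⁻¹ (fqG K q n) (fun i => mT K q n i i) i

/-- The action of `E_i` on `F_q^P[B_−]`, viewed as the `U_q^P(gl_n)`-module induced from the trivial
character of the subalgebra generated by the `E_i`. -/
theorem exists_verma (q0 : q ≠ 0) (qm : q - q⁻¹ ≠ 0) (qp : q + q⁻¹ ≠ 0) (i : Fin (n - 1)) :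
    ∃ D : FqBm K q n →ₗ[K] FqBm K q n, D 1 = 0 ∧
      (∀ k y, D (fqG K q n k * y) = q ^ (-wt i k) • (fqG K q n k * D y)) ∧
      (∀ k y, D (mT K q n k k * y) = q ^ (wt i k) • (mT K q n k k * D y)) ∧
      ∀ j y, D (fqF K q n j * y) = fqF K q n j * D y + if i = j then fqH K q n i * y else 0 := by
  obtain ⟨Φ, h1, h2, h3⟩ := fq_lift q0 qm qp
    ((fq_isBorel (n := n) q0 qm qp).twist q0 (q - q⁻¹)⁻¹ i)
  let S : Subalgebra K (FqBm K q n) :=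
    { carrier := {x | Φ x 1 0 = 0 ∧ Φ x 1 1 = x}
      mul_mem' := by
        rintro a b ⟨ha, ha'⟩ ⟨hb, hb'⟩
        simp [Matrix.mul_apply, ha, ha', hb, hb']
      add_mem' := by
        rintro a b ⟨ha, ha'⟩ ⟨hb, hb'⟩
        simp [ha, ha', hb, hb']
      algebraMap_mem' := fun r => by
        simp [Matrix.algebraMap_matrix_apply] }
  have hS : S = ⊤ := fq_eq_top' qm S
    (fun k => by change _ ∧ _; rw [h1]; simp [mat2])
    (fun k => by change _ ∧ _; rw [h2]; simp [mat2])
    (fun k => by change _ ∧ _; rw [h3]; simp [mat2])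
  have h11 : ∀ x, Φ x 1 1 = x := fun x => (show x ∈ S from hS ▸ Algebra.mem_top).2
  refine ⟨(Matrix.entryLinearMap K (FqBm K q n) 0 1).comp Φ.toLinearMap, ?_, ?_, ?_, ?_⟩
  · simp
  · intro k y
    simp [h2, mat2, Matrix.vecMul, dotProduct]
  · intro k y
    simp [h1, mat2, Matrix.vecMul, dotProduct]
  · intro j y
    simp only [LinearMap.comp_apply, AlgHom.toLinearMap_apply, Matrix.entryLinearMap_apply,
      map_mul, Matrix.mul_apply, Fin.sum_univ_two, h11, h3]
    simp [mat2, fqH]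

end VermaAction

/-! ### The representation of `U_q^P(gl_n)` on `F_q^P[B_−]` -/

section Representation

variable {K} {q : K} {n : ℕ}

variable (K q n) in
/-- The quotient map onto `U_q^P(gl_n)`. -/
def uqMk : FreeAlgebra K (GlGen n) →ₐ[K] Uq K q n := RingQuot.mkAlgHom K (GlRel K q n)

theorem uq_rel {a b : FreeAlgebra K (GlGen n)} (h : GlRel K q n a b) :
    uqMk K q n a = uqMk K q n b := RingQuot.mkAlgHom_rel K h

theorem lmul_apply' (x y : FqBm K q n) : Algebra.lmul K (FqBm K q n) x y = x * y := rfl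

/-- An operator killing `1` and `q`-commuting with left multiplication by generators is zero. -/
theorem fq_vanish (qm : q - q⁻¹ ≠ 0) (S : Module.End K (FqBm K q n)) (hS : S 1 = 0)
    (h1 : ∀ i, ∃ c : K, QC c S (Algebra.lmul K _ (mT K q n i i)))
    (h2 : ∀ i, ∃ c : K, QC c S (Algebra.lmul K _ (fqG K q n i)))
    (h3 : ∀ j, ∃ c : K, QC c S (Algebra.lmul K _ (fqF K q n j))) : S = 0 := by
  let T : Subalgebra K (FqBm K q n) :=
    { carrier := {x | ∀ y, S y = 0 → S (x * y) = 0}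
      mul_mem' := fun {a b} ha hb y hy => by rw [mul_assoc]; exact ha _ (hb _ hy)
      add_mem' := fun {a b} ha hb y hy => by rw [add_mul, map_add, ha y hy, hb y hy, add_zero]
      algebraMap_mem' := fun r y hy => by
        rw [← Algebra.smul_def, map_smul, hy, smul_zero] }
  have aux : ∀ x, (∃ c : K, QC c S (Algebra.lmul K _ x)) → x ∈ T := by
    rintro x ⟨c, hc⟩ y hy
    have := LinearMap.congr_fun (show S * Algebra.lmul K _ x = _ from hc) y
    simp only [Module.End.mul_apply, LinearMap.smul_apply, lmul_apply', hy, mul_zero,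
      smul_zero] at this
    exact this
  have hT : T = ⊤ := fq_eq_top' qm T (fun i => aux _ (h1 i)) (fun i => aux _ (h2 i))
    (fun i => aux _ (h3 i))
  ext x
  have hx : x ∈ T := hT ▸ Algebra.mem_top
  simpa using hx 1 hS

theorem QC.add {A : Type*} [Ring A] [Algebra K A] {s : K} {a b c : A} (h : QC s a b)
    (h' : QC s a c) : QC s a (b + c) := by
  unfold QC at *
  rw [mul_add, h, h', add_mul, smul_add]

/-- The Leibniz rule for commutators with `F`. -/
theorem der_mul {A : Type*} [Ring A] {a b F X Y : A} (ha : a * F = F * a + X)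
    (hb : b * F = F * b + Y) : (a * b) * F = F * (a * b) + (a * Y + X * b) := by
  rw [mul_assoc, hb, mul_add, ← mul_assoc, ha, add_mul, mul_assoc, add_assoc, add_comm (X * b)]

theorem der_comb {A : Type*} [Ring A] [Algebra K A] {c : K} {x y z F P Q R : A}
    (hx : x * F = F * x + P) (hy : y * F = F * y + Q) (hz : z * F = F * z + R)
    (h : P + Q = c • R) : (x + y - c • z) * F = F * (x + y - c • z) := by
  rw [sub_mul, add_mul, smul_mul_assoc, hx, hy, hz, smul_add, ← h, mul_sub, mul_add,
    mul_smul_comm]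
  abel

/-- If `[f_i, F] = δ_{ik} r (K_i - K_i⁻¹)` for all `i`, then `F` commutes with the Serre
polynomial in `f_i`, `f_j`. -/
theorem IsTorus.serre_comm {A : Type*} [Ring A] [Algebra K A] {g gi : Fin n → A}
    {f : Fin (n - 1) → A} (H : IsTorus q⁻¹ n g gi f) (q0 : q ≠ 0) {r : K} {F : A}
    {k : Fin (n - 1)} (ef : ∀ i, f i * F = F * f i + if i = k then hop r g gi i else 0)
    (i j : Fin (n - 1)) (h : i.val + 1 = j.val ∨ j.val + 1 = i.val) :
    (f i * f i * f j + f j * (f i * f i) - (q + q⁻¹) • (f i * f j * f i)) * F =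
      F * (f i * f i * f j + f j * (f i * f i) - (q + q⁻¹) • (f i * f j * f i)) := by
  have qi : q⁻¹ ≠ 0 := inv_ne_zero q0
  have hij : i ≠ j := by rintro rfl; omega
  have hq : q⁻¹ + q⁻¹⁻¹ = q + q⁻¹ := by rw [inv_inv, add_comm]
  refine der_comb (der_mul (der_mul (ef i) (ef i)) (ef j))
    (der_mul (ef j) (der_mul (ef i) (ef i))) (der_mul (der_mul (ef i) (ef j)) (ef i)) ?_
  by_cases h1 : i = k
  · have h2 : j ≠ k := h1 ▸ hij.symm
    have := H.hop_serre1 qi r i j h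
    rw [hq] at this
    simp only [if_pos h1, if_neg h2, mul_zero, zero_mul, zero_add, add_zero]
    rw [add_comm (f i * hop r g gi i), add_comm (f i * f j * hop r g gi i)]
    exact this
  · by_cases h2 : j = k
    · have := H.hop_serre2 qi r i j h
      rw [hq] at this
      simpa only [if_neg h1, if_pos h2, mul_zero, zero_mul, zero_add, add_zero] using this
    · simp [h1, h2]

/-- Under the same hypothesis, `F` commutes with the commutator of `f_i`, `f_j` for distant
`i`, `j`. -/
theorem IsTorus.ff_comm {A : Type*} [Ring A] [Algebra K A] {g gi : Fin n → A}
    {f : Fin (n - 1) → A} (H : IsTorus q⁻¹ n g gi f) (q0 : q ≠ 0) {r : K} {F : A}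
    {k : Fin (n - 1)} (ef : ∀ i, f i * F = F * f i + if i = k then hop r g gi i else 0)
    (i j : Fin (n - 1)) (h : i.val + 1 < j.val ∨ j.val + 1 < i.val) :
    (f i * f j - f j * f i) * F = F * (f i * f j - f j * f i) := by
  have qi : q⁻¹ ≠ 0 := inv_ne_zero q0
  rw [sub_mul, der_mul (ef i) (ef j), der_mul (ef j) (ef i)]
  suffices hs : f i * (if j = k then hop r g gi j else 0) +
      (if i = k then hop r g gi i else 0) * f j =
      f j * (if i = k then hop r g gi i else 0) + (if j = k then hop r g gi j else 0) * f i by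
    rw [hs, mul_sub]; abel
  have c1 : f j * hop r g gi i = hop r g gi i * f j := QC.one_iff.1 (H.hop_comm qi r i j h)
  have c2 : f i * hop r g gi j = hop r g gi j * f i := QC.one_iff.1 (H.hop_comm qi r j i h.symm)
  split_ifs <;> simp [c1, c2, add_comm]

theorem serre_qc {A : Type*} [Ring A] [Algebra K A] {G x y : A} {a b : K} (c : K)
    (ha : QC a G x) (hb : QC b G y) :
    QC (a * a * b) G (x * x * y + y * (x * x) - c • (x * y * x)) :=
  (((ha.mul ha).mul hb).add ((hb.mul (ha.mul ha)).of_eq (by ring))).sub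
    ((((ha.mul hb).mul ha).of_eq (by ring)).smul _)

/-- The representation of `U_q^P(gl_n)` on `F_q^P[B_−]` in which `G_i`, `G_i⁻¹`, `F_j` act by left
multiplication. -/
theorem exists_rep (q0 : q ≠ 0) (qm : q - q⁻¹ ≠ 0) (qp : q + q⁻¹ ≠ 0) :
    ∃ Θ : Uq K q n →ₐ[K] Module.End K (FqBm K q n),
      (∀ i, Θ (uG K q n i) = Algebra.lmul K _ (fqG K q n i)) ∧
      (∀ i, Θ (uGi K q n i) = Algebra.lmul K _ (mT K q n i i)) ∧
      ∀ j, Θ (uF K q n j) = Algebra.lmul K _ (fqF K q n j) := by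
  choose D D1 Dg Dgi Df using exists_verma (n := n) q0 qm qp
  set L := Algebra.lmul K (FqBm K q n) with hL
  have HB := (fq_isBorel (n := n) q0 qm qp).map L
  have HT := HB.toIsTorus
  have ge : ∀ i j, L (fqG K q n i) * D j = q ^ (wt j i) • (D j * L (fqG K q n i)) := by
    intro i j
    ext y
    simp only [Module.End.mul_apply, LinearMap.smul_apply, hL, lmul_apply', Dg, smul_smul,
      ← zpow_add₀ q0, add_neg_cancel, zpow_zero, one_smul]
  have TE : IsTorus q⁻¹ n (fun i => L (fqG K q n i)) (fun i => L (mT K q n i i)) D := by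
    refine ⟨HT.ggi, HT.gig, HT.gigi, fun i j => ?_⟩
    rw [ge, inv_zpow, ← zpow_neg, neg_sub, wt]
  set r := (q - q⁻¹)⁻¹ with hr
  set Hop := hop r (fun i => L (fqG K q n i)) (fun i => L (mT K q n i i)) with hHop
  have hH : ∀ i, Hop i = L (fqH K q n i) := by
    intro i
    simp only [hHop, fqH, hop, map_smul, map_sub, map_mul, hr]
  have ef : ∀ i j, D i * L (fqF K q n j) = L (fqF K q n j) * D i + if i = j then Hop i else 0 := by
    intro i j
    ext y
    simp only [Module.End.mul_apply, LinearMap.add_apply, hL, lmul_apply', Df, hH]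
    split_ifs <;> rfl
  have qi : q⁻¹ ≠ 0 := inv_ne_zero q0
  have van : ∀ (S : Module.End K (FqBm K q n)) (c : Fin n → K) (c' : Fin n → K), S 1 = 0 →
      (∀ k, c k ≠ 0) → (∀ k, c' k ≠ 0) →
      (∀ k, QC (c k) (L (fqG K q n k)) S) → (∀ k, QC (c' k) (L (mT K q n k k)) S) →
      (∀ k, S * L (fqF K q n k) = L (fqF K q n k) * S) → S = 0 := by
    intro S c c' hS hc hc' h1 h2 h3
    exact fq_vanish qm S hS (fun k => ⟨_, (h2 k).symm (hc' k)⟩) (fun k => ⟨_, (h1 k).symm (hc k)⟩)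
      (fun k => ⟨1, QC.one_iff.2 (h3 k)⟩)
  have ee : ∀ i j : Fin (n - 1), i.val + 1 < j.val ∨ j.val + 1 < i.val →
      D i * D j = D j * D i := by
    intro i j h
    rw [← sub_eq_zero]
    refine van _ _ _ (by simp [D1]) (fun k => mul_ne_zero (zpow_ne_zero _ qi) (zpow_ne_zero _ qi))
      (fun k => mul_ne_zero (zpow_ne_zero _ qi) (zpow_ne_zero _ qi))
      (fun k => ((TE.qg k i).mul (TE.qg k j)).sub
        (((TE.qg k j).mul (TE.qg k i)).of_eq (mul_comm _ _)))
      (fun k => ((TE.qgi qi k i).mul (TE.qgi qi k j)).sub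
        (((TE.qgi qi k j).mul (TE.qgi qi k i)).of_eq (mul_comm _ _))) ?_
    exact fun k => TE.ff_comm q0 (fun i => ef i k) i j h
  have serre : ∀ i j : Fin (n - 1), i.val + 1 = j.val ∨ j.val + 1 = i.val →
      D i * D i * D j + D j * (D i * D i) = (q + q⁻¹) • (D i * D j * D i) := by
    intro i j h
    have hz : D i * D i * D j + D j * (D i * D i) - (q + q⁻¹) • (D i * D j * D i)
        = 0 := by
      refine van _ _ _ (by simp [D1])
        (fun k => mul_ne_zero (mul_ne_zero (zpow_ne_zero _ qi) (zpow_ne_zero _ qi))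
          (zpow_ne_zero _ qi))
        (fun k => mul_ne_zero (mul_ne_zero (zpow_ne_zero _ qi) (zpow_ne_zero _ qi))
          (zpow_ne_zero _ qi))
        (fun k => serre_qc _ (TE.qg k i) (TE.qg k j))
        (fun k => serre_qc _ (TE.qgi qi k i) (TE.qgi qi k j))
        (fun k => TE.serre_comm q0 (fun i => ef i k) i j h)
    exact sub_eq_zero.1 hz
  let gen : GlGen n → Module.End K (FqBm K q n) := fun
    | GlGen.E i => D i
    | GlGen.F i => L (fqF K q n i)
    | GlGen.G i => L (fqG K q n i)
    | GlGen.Gi i => L (mT K q n i i)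
  have lE : ∀ i, FreeAlgebra.lift K gen (fe K n i) = D i := fun i => by
    rw [fe, FreeAlgebra.lift_ι_apply]
  have lF : ∀ i, FreeAlgebra.lift K gen (ff K n i) = L (fqF K q n i) := fun i => by
    rw [_root_.ff, FreeAlgebra.lift_ι_apply]
  have lG : ∀ i, FreeAlgebra.lift K gen (fg K n i) = L (fqG K q n i) := fun i => by
    rw [fg, FreeAlgebra.lift_ι_apply]
  have lGi : ∀ i, FreeAlgebra.lift K gen (fgi K n i) = L (mT K q n i i) := fun i => by
    rw [fgi, FreeAlgebra.lift_ι_apply]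
  have hrel : ∀ ⦃a b⦄, GlRel K q n a b → FreeAlgebra.lift K gen a = FreeAlgebra.lift K gen b := by
    intro a b h
    cases h with
    | ggi i => rw [map_mul, map_one, lG, lGi]; exact HB.ggi i
    | gig i => rw [map_mul, map_one, lG, lGi]; exact HB.gig i
    | gg i j => simp only [map_mul, lG]; exact QC.one_iff.1 (HT.gg_comm i j)
    | ggi' i j => simp only [map_mul, lG, lGi]; exact QC.one_iff.1 (HT.ggi_comm i j)
    | gigi i j => simp only [map_mul, lGi]; exact HB.gigi i j
    | gf i j => simp only [map_mul, map_smul, lG, lF]; exact HB.gf i j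
    | ge i j => simp only [map_mul, map_smul, lG, lE]; exact ge i j
    | ef i j =>
      simp only [map_mul, map_add, lE, lF, ef]
      congr 1
      split_ifs
      · simp only [map_smul, map_sub, map_mul, lG, lGi]; rfl
      · rw [map_zero]
    | ee i j h => simp only [map_mul, lE]; exact ee i j h
    | ffcomm i j h =>
      simp only [map_mul, lF]
      rcases h with h | h
      · exact HB.ff i j h
      · exact (HB.ff j i h).symm
    | serreE i j h => simp only [map_mul, map_add, map_smul, lE]; exact serre i j h
    | serreF i j h => simp only [map_mul, map_add, map_smul, lF]; exact HB.serre i j h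
  refine ⟨RingQuot.liftAlgHom K ⟨FreeAlgebra.lift K gen, hrel⟩, fun i => ?_, fun i => ?_,
    fun i => ?_⟩
  · rw [← lG]; exact RingQuot.liftAlgHom_mkAlgHom_apply K _ hrel _
  · rw [← lGi]; exact RingQuot.liftAlgHom_mkAlgHom_apply K _ hrel _
  · rw [← lF]; exact RingQuot.liftAlgHom_mkAlgHom_apply K _ hrel _

end Representation

/-! ### The isomorphism and its compatibility with comultiplication -/

section Isomorphism

variable {K} {q : K} {n : ℕ}

theorem ubm_isBorel : IsBorel q n (mG K q n) (mGi K q n) (mF K q n) := by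
  constructor
  · intro i
    have := uq_rel (GlRel.ggi (q := q) i)
    rw [map_mul, map_one] at this
    exact Subtype.ext this
  · intro i
    have := uq_rel (GlRel.gig (q := q) i)
    rw [map_mul, map_one] at this
    exact Subtype.ext this
  · intro i j
    have := uq_rel (GlRel.gigi (q := q) i j)
    simp only [map_mul] at this
    exact Subtype.ext this
  · intro i j
    have := uq_rel (GlRel.gf (q := q) i j)
    simp only [map_mul, map_smul] at this
    exact Subtype.ext this
  · intro i j h
    have := uq_rel (GlRel.ffcomm (q := q) i j (Or.inl h))
    simp only [map_mul] at this
    exact Subtype.ext this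
  · intro i j h
    have := uq_rel (GlRel.serreF (q := q) i j h)
    simp only [map_mul, map_smul, map_add] at this
    exact Subtype.ext this

theorem ubm_hom_ext {A : Type*} [Semiring A] [Algebra K A] {φ ψ : UbM K q n →ₐ[K] A}
    (h1 : ∀ i, φ (mG K q n i) = ψ (mG K q n i)) (h2 : ∀ i, φ (mGi K q n i) = ψ (mGi K q n i))
    (h3 : ∀ j, φ (mF K q n j) = ψ (mF K q n j)) : φ = ψ := by
  ext ⟨x, hx⟩
  induction hx using Algebra.adjoin_induction with
  | mem x hx =>
    rcases hx with ⟨i, rfl⟩ | ⟨i, rfl⟩ | ⟨i, rfl⟩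
    · exact h1 i
    · exact h2 i
    · exact h3 i
  | algebraMap r => exact (φ.commutes r).trans (ψ.commutes r).symm
  | add x y hx hy h h' =>
    exact (map_add φ ⟨x, hx⟩ ⟨y, hy⟩).trans ((congrArg₂ (· + ·) h h').trans
      (map_add ψ ⟨x, hx⟩ ⟨y, hy⟩).symm)
  | mul x y hx hy h h' =>
    exact (map_mul φ ⟨x, hx⟩ ⟨y, hy⟩).trans ((congrArg₂ (· * ·) h h').trans
      (map_mul ψ ⟨x, hx⟩ ⟨y, hy⟩).symm)

/-- The homomorphism `U_q^P(b_−) → F_q^P[B_−]`, obtained by letting `U_q^P(b_−)` act on the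
vector `1`. -/
theorem exists_zeta (q0 : q ≠ 0) (qm : q - q⁻¹ ≠ 0) (qp : q + q⁻¹ ≠ 0) :
    ∃ ζ : UbM K q n →ₐ[K] FqBm K q n, (∀ i, ζ (mG K q n i) = fqG K q n i) ∧
      (∀ i, ζ (mGi K q n i) = mT K q n i i) ∧ ∀ j, ζ (mF K q n j) = fqF K q n j := by
  obtain ⟨Θ, hG, hGi, hF⟩ := exists_rep (n := n) q0 qm qp
  set L := Algebra.lmul K (FqBm K q n) with hL
  have hle : UbM K q n ≤ L.range.comap Θ := by
    refine Algebra.adjoin_le ?_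
    rintro x (⟨i, rfl⟩ | ⟨i, rfl⟩ | ⟨i, rfl⟩)
    · exact ⟨_, (hG i).symm⟩
    · exact ⟨_, (hGi i).symm⟩
    · exact ⟨_, (hF i).symm⟩
  have hL1 : ∀ u ∈ UbM K q n, Θ u = L (Θ u 1) := by
    intro u hu
    obtain ⟨b, hb⟩ := hle hu
    have hb : L b = Θ u := hb
    rw [← hb, hL, lmul_apply', mul_one]
  refine ⟨AlgHom.ofLinearMap
    ((LinearMap.applyₗ (1 : FqBm K q n)).comp (Θ.toLinearMap.comp (UbM K q n).val.toLinearMap))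
    ?_ ?_, fun i => ?_, fun i => ?_, fun i => ?_⟩
  · change Θ 1 1 = 1
    rw [map_one Θ]; rfl
  · rintro ⟨u, hu⟩ ⟨v, hv⟩
    change Θ (u * v) 1 = Θ u 1 * Θ v 1
    rw [map_mul, Module.End.mul_apply, ← lmul_apply', ← hL, ← hL1 u hu]
  · change Θ (uG K q n i) 1 = _
    rw [hG, hL, lmul_apply', mul_one]
  · change Θ (uGi K q n i) 1 = _
    rw [hGi, hL, lmul_apply', mul_one]
  · change Θ (uF K q n i) 1 = _
    rw [hF, hL, lmul_apply', mul_one]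

theorem exists_iso (q0 : q ≠ 0) (qm : q - q⁻¹ ≠ 0) (qp : q + q⁻¹ ≠ 0) :
    ∃ ζ : UbM K q n ≃ₐ[K] FqBm K q n, (∀ i, ζ (mG K q n i) = fqG K q n i) ∧
      (∀ i, ζ (mGi K q n i) = mT K q n i i) ∧ ∀ j, ζ (mF K q n j) = fqF K q n j := by
  obtain ⟨ζ, hG, hGi, hF⟩ := exists_zeta (n := n) q0 qm qp
  obtain ⟨ψ, pGi, pG, pF⟩ := fq_lift q0 qm qp (ubm_isBorel (K := K) (q := q) (n := n))
  refine ⟨AlgEquiv.ofAlgHom ζ ψ (fq_hom_ext qm ?_ ?_ ?_) (ubm_hom_ext ?_ ?_ ?_), hG, hGi, hF⟩ <;>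
    intro i <;> simp [hG, hGi, hF, pG, pGi, pF]

/-- Comultiplication on the diagonal: by triangularity only one term survives. -/
theorem sum_tensor_diag (i : Fin n) :
    ∑ l : Fin n, mT K q n i l ⊗ₜ[K] mT K q n l i = mT K q n i i ⊗ₜ[K] mT K q n i i := by
  refine Finset.sum_eq_single i (fun l _ hl => ?_) (fun h => absurd (Finset.mem_univ i) h)
  rcases lt_or_gt_of_ne hl with h | h
  · rw [mT_tri l i h, TensorProduct.tmul_zero]
  · rw [mT_tri i l h, TensorProduct.zero_tmul]

/-- Comultiplication on the subdiagonal: two terms survive. -/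
theorem sum_tensor_sub (j : Fin (n - 1)) :
    ∑ l : Fin n, mT K q n (idxhi j) l ⊗ₜ[K] mT K q n l (idxlo j) =
      mT K q n (idxhi j) (idxlo j) ⊗ₜ[K] mT K q n (idxlo j) (idxlo j) +
        mT K q n (idxhi j) (idxhi j) ⊗ₜ[K] mT K q n (idxhi j) (idxlo j) := by
  have hne : idxlo j ≠ idxhi j := by
    intro h; have := congrArg Fin.val h; simp [idxlo, idxhi] at this
  rw [← Finset.sum_pair (f := fun l => mT K q n (idxhi j) l ⊗ₜ[K] mT K q n l (idxlo j)) hne]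
  symm
  refine Finset.sum_subset (Finset.subset_univ _) (fun l _ hl => ?_)
  rw [Finset.mem_insert, Finset.mem_singleton, not_or] at hl
  rcases lt_or_ge l (idxlo j) with h | h
  · rw [mT_tri l _ h, TensorProduct.tmul_zero]
  · have h' : idxhi j < l := by
      have h1 : (idxlo j : Fin n).val ≤ l.val := h
      have h2 : l.val ≠ (idxlo j : Fin n).val := fun h => hl.1 (Fin.ext h)
      have h3 : l.val ≠ (idxhi j : Fin n).val := fun h => hl.2 (Fin.ext h)
      simp only [idxlo, idxhi] at h1 h2 h3
      exact Fin.lt_def.2 (by simp only [idxhi]; omega)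
    rw [mT_tri _ l h', TensorProduct.zero_tmul]

theorem fqG_mT_comm (i j : Fin n) : Commute (fqG K q n i) (mT K q n j j) :=
  calc fqG K q n i * mT K q n j j
      = fqG K q n i * (mT K q n j j * mT K q n i i) * fqG K q n i := by
        rw [mul_assoc, mul_assoc, mT_fqG, mul_one]
    _ = mT K q n j j * fqG K q n i := by
        rw [(mT_diag_comm j i).eq, ← mul_assoc, fqG_mT, one_mul]

section Comul

variable {ΔF : FqBm K q n →ₐ[K] FqBm K q n ⊗[K] FqBm K q n}
  (hΔ : ∀ i j, ΔF (mT K q n i j) = ∑ l : Fin n, mT K q n i l ⊗ₜ[K] mT K q n l j)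
include hΔ

theorem comul_fqG (i : Fin n) : ΔF (fqG K q n i) = fqG K q n i ⊗ₜ[K] fqG K q n i := by
  have h1 : ΔF (fqG K q n i) * (mT K q n i i ⊗ₜ[K] mT K q n i i) = 1 := by
    rw [← sum_tensor_diag, ← hΔ, ← map_mul, fqG_mT, map_one]
  have h2 : (mT K q n i i ⊗ₜ[K] mT K q n i i) * (fqG K q n i ⊗ₜ[K] fqG K q n i) = 1 := by
    rw [Algebra.TensorProduct.tmul_mul_tmul, mT_fqG]; rfl
  exact left_inv_eq_right_inv h1 h2

theorem comul_fqF (j : Fin (n - 1)) : ΔF (fqF K q n j) =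
    fqF K q n j ⊗ₜ[K] (mT K q n (idxlo j) (idxlo j) * fqG K q n (idxhi j)) +
      1 ⊗ₜ[K] fqF K q n j := by
  rw [fqF, map_smul, map_mul, comul_fqG hΔ, hΔ, sum_tensor_sub, mul_add,
    Algebra.TensorProduct.tmul_mul_tmul, Algebra.TensorProduct.tmul_mul_tmul, fqG_mT,
    (fqG_mT_comm _ _).eq, smul_add, TensorProduct.smul_tmul', TensorProduct.tmul_smul]

end Comul

end Isomorphism

/-! ### Nonvanishing of `X ± X⁻¹` in `k(X)` -/

section Scalars

variable {k : Type} [Field k]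

theorem ratFunc_X_sq_ne (c : k) : (RatFunc.X : RatFunc k) ^ 2 ≠ RatFunc.C c := by
  rw [← RatFunc.algebraMap_X, ← RatFunc.algebraMap_C, ← map_pow]
  intro h
  have := congrArg Polynomial.natDegree (RatFunc.algebraMap_injective k h)
  simp at this

theorem ratFunc_sub_inv_ne_zero : (RatFunc.X : RatFunc k) - RatFunc.X⁻¹ ≠ 0 := by
  intro h
  refine ratFunc_X_sq_ne (1 : k) ?_
  rw [map_one, sq, ← mul_inv_cancel₀ (RatFunc.X_ne_zero (K := k))]
  exact congrArg _ (sub_eq_zero.1 h)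

theorem ratFunc_add_inv_ne_zero : (RatFunc.X : RatFunc k) + RatFunc.X⁻¹ ≠ 0 := by
  intro h
  refine ratFunc_X_sq_ne (-1 : k) ?_
  rw [map_neg, map_one, sq, ← mul_inv_cancel₀ (RatFunc.X_ne_zero (K := k)), ← mul_neg]
  exact congrArg _ (eq_neg_of_add_eq_zero_left h)

end Scalars

set_option synthInstance.maxHeartbeats 1000000
set_option maxHeartbeats 2000000

/-- the assignment `G_i^{±1} ↦ t_{ii}^{∓1}`,
`F_j ↦ (q−q⁻¹)⁻¹ t_{j+1,j+1}⁻¹ t_{j+1,j}` extends to an isomorphism of Hopf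
`k(q)`-algebras `ζ_− : U_q^P(b_−) → F_q^P[B_−]`: an algebra isomorphism with the
stated values on generators, compatible with the comultiplications and counits
(determined on generators as hypothesized). -/
theorem borel_minus_iso (k : Type) [Field k] [CharZero k] (n : ℕ)
    (ΔU : (UbM (RatFunc k) RatFunc.X n) →ₐ[RatFunc k]
      ((UbM (RatFunc k) RatFunc.X n) ⊗[RatFunc k] (UbM (RatFunc k) RatFunc.X n)))
    (hΔU1 : ∀ i, ΔU (mG (RatFunc k) RatFunc.X n i) =
      mG (RatFunc k) RatFunc.X n i ⊗ₜ[RatFunc k] mG (RatFunc k) RatFunc.X n i)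
    (hΔU2 : ∀ i, ΔU (mGi (RatFunc k) RatFunc.X n i) =
      mGi (RatFunc k) RatFunc.X n i ⊗ₜ[RatFunc k] mGi (RatFunc k) RatFunc.X n i)
    (hΔU3 : ∀ j, ΔU (mF (RatFunc k) RatFunc.X n j) =
      mF (RatFunc k) RatFunc.X n j ⊗ₜ[RatFunc k]
          (mGi (RatFunc k) RatFunc.X n (idxlo j) * mG (RatFunc k) RatFunc.X n (idxhi j)) +
        1 ⊗ₜ[RatFunc k] mF (RatFunc k) RatFunc.X n j)
    (εU : (UbM (RatFunc k) RatFunc.X n) →ₐ[RatFunc k] RatFunc k)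
    (hεU1 : ∀ i, εU (mG (RatFunc k) RatFunc.X n i) = 1)
    (hεU2 : ∀ i, εU (mGi (RatFunc k) RatFunc.X n i) = 1)
    (hεU3 : ∀ j, εU (mF (RatFunc k) RatFunc.X n j) = 0)
    (ΔF : (FqBm (RatFunc k) RatFunc.X n) →ₐ[RatFunc k]
      ((FqBm (RatFunc k) RatFunc.X n) ⊗[RatFunc k] (FqBm (RatFunc k) RatFunc.X n)))
    (hΔF1 : ∀ i j, ΔF (mT (RatFunc k) RatFunc.X n i j) =
      ∑ l : Fin n, mT (RatFunc k) RatFunc.X n i l ⊗ₜ[RatFunc k] mT (RatFunc k) RatFunc.X n l j)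
    (hΔF2 : ΔF (mDinv (RatFunc k) RatFunc.X n) =
      mDinv (RatFunc k) RatFunc.X n ⊗ₜ[RatFunc k] mDinv (RatFunc k) RatFunc.X n)
    (εF : (FqBm (RatFunc k) RatFunc.X n) →ₐ[RatFunc k] RatFunc k)
    (hεF1 : ∀ i j, εF (mT (RatFunc k) RatFunc.X n i j) = if i = j then 1 else 0)
    (hεF2 : εF (mDinv (RatFunc k) RatFunc.X n) = 1) :
    ∃ ζ : (UbM (RatFunc k) RatFunc.X n) ≃ₐ[RatFunc k] FqBm (RatFunc k) RatFunc.X n,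
      (∀ i, ζ (mG (RatFunc k) RatFunc.X n i) * mT (RatFunc k) RatFunc.X n i i = 1 ∧
        mT (RatFunc k) RatFunc.X n i i * ζ (mG (RatFunc k) RatFunc.X n i) = 1) ∧
      (∀ i, ζ (mGi (RatFunc k) RatFunc.X n i) = mT (RatFunc k) RatFunc.X n i i) ∧
      (∀ j, ζ (mF (RatFunc k) RatFunc.X n j) =
        ((RatFunc.X - (RatFunc.X)⁻¹ : RatFunc k)⁻¹) •
          (ζ (mG (RatFunc k) RatFunc.X n (idxhi j)) *
            mT (RatFunc k) RatFunc.X n (idxhi j) (idxlo j))) ∧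
      (∀ x, ΔF (ζ x) = (Algebra.TensorProduct.map ζ.toAlgHom ζ.toAlgHom) (ΔU x)) ∧
      (∀ x, εF (ζ x) = εU x) := by
  have q0 : (RatFunc.X : RatFunc k) ≠ 0 := RatFunc.X_ne_zero
  obtain ⟨ζ, hG, hGi, hF⟩ := exists_iso (n := n) q0 ratFunc_sub_inv_ne_zero ratFunc_add_inv_ne_zero
  refine ⟨ζ, fun i => ⟨by rw [hG, fqG_mT], by rw [hG, mT_fqG]⟩, hGi,
    fun j => by rw [hF, hG, fqF], ?_, ?_⟩
  · have h : ΔF.comp ζ.toAlgHom =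
        (Algebra.TensorProduct.map ζ.toAlgHom ζ.toAlgHom).comp ΔU := by
      refine ubm_hom_ext (fun i => ?_) (fun i => ?_) (fun j => ?_)
      · change ΔF (ζ _) = Algebra.TensorProduct.map ζ.toAlgHom ζ.toAlgHom (ΔU _)
        rw [hG, hΔU1, comul_fqG hΔF1]
        exact (congrArg₂ (· ⊗ₜ[RatFunc k] ·) (hG i) (hG i)).symm
      · change ΔF (ζ _) = Algebra.TensorProduct.map ζ.toAlgHom ζ.toAlgHom (ΔU _)
        rw [hGi, hΔU2, hΔF1, sum_tensor_diag]
        exact (congrArg₂ (· ⊗ₜ[RatFunc k] ·) (hGi i) (hGi i)).symm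
      · change ΔF (ζ _) = Algebra.TensorProduct.map ζ.toAlgHom ζ.toAlgHom (ΔU _)
        rw [hF, hΔU3, comul_fqF hΔF1, map_add, Algebra.TensorProduct.map_tmul,
          Algebra.TensorProduct.map_tmul, map_one, map_mul]
        change _ = ζ _ ⊗ₜ[RatFunc k] (ζ _ * ζ _) + 1 ⊗ₜ[RatFunc k] ζ _
        rw [hF, hGi, hG]
    exact fun x => DFunLike.congr_fun h x
  · have h : εF.comp ζ.toAlgHom = εU := by
      refine ubm_hom_ext (fun i => ?_) (fun i => ?_) (fun j => ?_)
      · change εF (ζ _) = _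
        have h1 : εF (fqG (RatFunc k) RatFunc.X n i * mT (RatFunc k) RatFunc.X n i i) = 1 := by
          rw [fqG_mT, map_one]
        rw [map_mul, hεF1, if_pos rfl, mul_one] at h1
        rw [hG, h1, hεU1]
      · change εF (ζ _) = _
        rw [hGi, hεF1, if_pos rfl, hεU2]
      · change εF (ζ _) = _
        have hne : idxhi j ≠ idxlo j := fun h => by
          simpa [idxlo, idxhi] using congrArg Fin.val h
        rw [hF, fqF, map_smul, map_mul, hεF1, if_neg hne, mul_zero, smul_zero, hεU3]
    exact fun x => DFunLike.congr_fun h x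

end
end

section
/- The commutative k-algebra Ũ₁ := F[(GL_n)*_P], the coordinate ring of the group of pairs (Γ, B) with Γ lower-triangular invertible, B upper-triangular invertible, and diag(Γ)·diag(B) = I, carries a unique Poisson bracket satisfying: {x_{ih}, x_{iℓ}} = x_{ih}x_{iℓ} and {x_{hj}, x_{ℓj}} = x_{hj}x_{ℓj} for h < ℓ, {x_{hh}, x_{ℓℓ}} = 0, {x_{ij}, x_{hk}} = 0 for i < h, j > k, {x_{ij}, x_{hk}} = 2 x_{ik}x_{hj} for i < h, j < k (where x is either β, the entries of B, or γ, the entries of Γ), together with {β_{js}, γ_{ik}} = (δ_{ij} − δ_{ks}) β_{js}γ_{ik} + 2δ_{i>j} γ_{jk}β_{is} − 2δ_{s>k} β_{jk}γ_{is}. With this bracket the Jacobi identity and the Leibniz rule hold, so Ũ₁ is a Poisson algebra. -/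
/-!
Let `r = ∑ e_{aa} ⊗ e_{aa} + 2 ∑_{a < b} e_{ab} ⊗ e_{ba}`. The prescribed relations say that
`{B₁, B₂} = [r, B₁ B₂]`, `{B₁, Γ₂} = [r, B₁ Γ₂]` and `{Γ₁, Γ₂} = [r, Γ₁ Γ₂]`
(`rBracket`, `eq_rBracket_of_conds`, `mixed_eq_rBracket`); the values on unordered pairs of entries
follow by antisymmetry, and `{a, a} = 0` because `2` is invertible. The entries generate the
algebra, so a biderivation with these values is unique.

For existence, a biderivation is a derivation with values in the module of derivations, so it is
obtained by applying twice the universal property of derivations on a quotient of a polynomial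
algebra (`exists_derivation_of_relations`). The required compatibility with `β_{aa} γ_{aa} = 1`
holds because every entry `x` satisfies `{x, γ_{aa}} = c x γ_{aa}` and `{x, β_{aa}} = -c x β_{aa}`
with the same integer `c` (`entryBracket_relation`).

Antisymmetry and the Jacobi identity only need to be checked on entries (`antisymm_of_generators`,
`jacobi_of_generators`). Antisymmetry holds because `r + r₂₁` is twice the permutation operator.
The Jacobi identity reduces to the classical Yang–Baxter equation for `r`, applied to left
multiplication on row indices and to right multiplication on column indices
(`lAct_yangBaxter`, `rAct_yangBaxter`, `jacobi_rBracket`).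
-/


noncomputable section

/-- Variables for `F[(GL_n)*_P]`: one variable `β_{ij}` for each pair `i ≤ j`
(entries of the upper-triangular matrix `B`), and one variable `γ_{ij}` for each pair
`j ≤ i` (entries of the lower-triangular matrix `Γ`). -/
def GLdualVar (n : ℕ) : Type :=
  {p : Fin n × Fin n // p.1 ≤ p.2} ⊕ {p : Fin n × Fin n // p.2 ≤ p.1}

/-- The ideal of relations `β_{ii} γ_{ii} = 1`. -/
def GLdualIdeal (k : Type*) [Field k] (n : ℕ) : Ideal (MvPolynomial (GLdualVar n) k) :=
  Ideal.span (Set.range fun i : Fin n =>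
    MvPolynomial.X (Sum.inl ⟨(i, i), le_refl i⟩) *
      MvPolynomial.X (Sum.inr ⟨(i, i), le_refl i⟩) - 1)

/-- `F[(GL_n)*_P]`: the polynomial algebra in the variables `β_{ij}` (`i ≤ j`) and
`γ_{ji}` (`i ≤ j`) modulo the relations `β_{ii} γ_{ii} = 1` (which make the diagonal
entries invertible, with inverse diagonals). -/
def GLdual (k : Type*) [Field k] (n : ℕ) : Type _ :=
  MvPolynomial (GLdualVar n) k ⧸ GLdualIdeal k n

instance (k : Type*) [Field k] (n : ℕ) : CommRing (GLdual k n) :=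
  inferInstanceAs (CommRing (MvPolynomial (GLdualVar n) k ⧸ GLdualIdeal k n))

instance (k : Type*) [Field k] (n : ℕ) : Algebra k (GLdual k n) :=
  inferInstanceAs (Algebra k (MvPolynomial (GLdualVar n) k ⧸ GLdualIdeal k n))

/-- The entry `β_{ij}` of the upper-triangular matrix `B` (zero below the diagonal). -/
def Bent (k : Type*) [Field k] (n : ℕ) (i j : Fin n) : GLdual k n :=
  if h : i ≤ j then
    Ideal.Quotient.mk (GLdualIdeal k n) (MvPolynomial.X (Sum.inl ⟨(i, j), h⟩)) else 0

/-- The entry `γ_{ij}` of the lower-triangular matrix `Γ` (zero above the diagonal). -/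
def Gent (k : Type*) [Field k] (n : ℕ) (i j : Fin n) : GLdual k n :=
  if h : j ≤ i then
    Ideal.Quotient.mk (GLdualIdeal k n) (MvPolynomial.X (Sum.inr ⟨(i, j), h⟩)) else 0

/-- The generator conditions (2.17) for a bracket `P` and a triangular family `X`. -/
def TriangularBracketConds {k : Type*} [Field k] {n : ℕ}
    (P : GLdual k n → GLdual k n → GLdual k n) (X : Fin n → Fin n → GLdual k n) : Prop :=
  (∀ i h l : Fin n, h < l → P (X i h) (X i l) = X i h * X i l) ∧
  (∀ h l j : Fin n, h < l → P (X h j) (X l j) = X h j * X l j) ∧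
  (∀ h l : Fin n, h < l → P (X h h) (X l l) = 0) ∧
  (∀ i j h l : Fin n, i < h → l < j → P (X i j) (X h l) = 0) ∧
  (∀ i j h l : Fin n, i < h → j < l → P (X i j) (X h l) = (2 : k) • (X i l * X h j))


/-! ### Derivations on a quotient of a polynomial algebra -/

/-- Universal property of derivations on a quotient of a polynomial algebra by relations
`X_{a i} X_{b i} = 1`: values on the generators extend to a derivation as soon as they are
compatible with these relations. The target is an arbitrary module, so that the lemma also applies
to derivations with values in derivations, that is, to biderivations. -/
theorem exists_derivation_of_relations {k σ ι A M : Type*} [Field k] [CommRing A] [Algebra k A]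
    [AddCommGroup M] [Module k M] [Module A M] [IsScalarTower k A M]
    (φ : MvPolynomial σ k →ₐ[k] A) (hφ : Function.Surjective φ) (a b : ι → σ)
    (hker : RingHom.ker φ = Ideal.span (Set.range fun i : ι =>
      (MvPolynomial.X (a i) * MvPolynomial.X (b i) - 1 : MvPolynomial σ k)))
    (f : σ → M)
    (hf : ∀ i, φ (MvPolynomial.X (a i)) • f (b i) + φ (MvPolynomial.X (b i)) • f (a i) = 0) :
    ∃ D : Derivation k A M, ∀ x, D (φ (MvPolynomial.X x)) = f x := by
  let _ : Module (MvPolynomial σ k) M := Module.compHom M φ.toRingHom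
  have hsm : ∀ (p : MvPolynomial σ k) (m : M), p • m = φ p • m := fun _ _ => rfl
  have : IsScalarTower k (MvPolynomial σ k) M :=
    ⟨fun c p m => by rw [hsm, hsm, map_smul, smul_assoc]⟩
  let D₀ : Derivation k (MvPolynomial σ k) M := MvPolynomial.mkDerivation k f
  have hX : ∀ x, D₀ (MvPolynomial.X x) = f x := fun x => MvPolynomial.mkDerivation_X k f x
  have hzero : ∀ p, φ p = 0 → D₀ p = 0 := by
    intro p hp
    have hp' : p ∈ RingHom.ker φ := hp
    rw [hker] at hp'
    refine Submodule.span_induction (p := fun q _ => φ q = 0 ∧ D₀ q = 0) ?_ ?_ ?_ ?_ hp' |>.2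
    · rintro _ ⟨i, rfl⟩
      constructor
      · have : (MvPolynomial.X (a i) * MvPolynomial.X (b i) - 1 : MvPolynomial σ k)
            ∈ RingHom.ker φ := by
          rw [hker]; exact Ideal.subset_span ⟨i, rfl⟩
        exact this
      · simp only [D₀.map_sub, D₀.map_one_eq_zero, D₀.leibniz, hsm, hX, hf i, sub_zero]
    · simp
    · rintro x y _ _ ⟨h1, h2⟩ ⟨h3, h4⟩
      simp [h1, h2, h3, h4]
    · rintro c x _ ⟨h1, h2⟩
      refine ⟨by simp [h1], ?_⟩
      rw [smul_eq_mul, D₀.leibniz, hsm, hsm, h1, h2]; simp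
  have hwd : ∀ p q, φ p = φ q → D₀ p = D₀ q := by
    intro p q h
    rw [← sub_eq_zero, ← D₀.map_sub]
    exact hzero _ (by rw [map_sub, h, sub_self])
  let g : A → MvPolynomial σ k := Function.surjInv hφ
  have hg : ∀ x, φ (g x) = x := Function.surjInv_eq hφ
  let L : A →ₗ[k] M :=
    { toFun := fun x => D₀ (g x)
      map_add' := fun x y => by
        rw [← D₀.map_add]; exact hwd _ _ (by simp [hg])
      map_smul' := fun c x => by
        rw [RingHom.id_apply, ← D₀.map_smul]; exact hwd _ _ (by simp [hg]) }
  refine ⟨Derivation.mk' L fun x y => ?_, fun x => ?_⟩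
  · change D₀ (g (x * y)) = x • D₀ (g y) + y • D₀ (g x)
    have := D₀.leibniz (g x) (g y)
    rw [hsm, hsm, hg, hg] at this
    rw [← this]
    exact hwd _ _ (by simp [hg])
  · change D₀ (g _) = f x
    rw [← hX]
    exact hwd _ _ (hg _)

/-! ### The `r`-matrix bracket on matrix entries -/

section rmatrix
variable {A : Type*} [CommRing A] {n : ℕ}

/-- Coefficient of `e_{ii} ⊗ e_{ii}` in the `r`-matrix: the Kronecker delta with values in `A`. -/
def rDiag (A : Type*) [CommRing A] {n : ℕ} (i h : Fin n) : A := if i = h then 1 else 0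

/-- Coefficient of `e_{ih} ⊗ e_{hi}` in the `r`-matrix, off the diagonal: `2` if `i < h`,
else `0`. -/
def rUp (A : Type*) [CommRing A] {n : ℕ} (i h : Fin n) : A := if i < h then 2 else 0

/-- The entry in rows `i, h` and columns `j, l` of the commutator `[r, X ⊗ Y]`, where
`r = ∑ e_{aa} ⊗ e_{aa} + 2 ∑_{a < b} e_{ab} ⊗ e_{ba}`. It is the value of the bracket of `X i j`
with `Y h l` when `(X, Y)` is `(B, B)`, `(B, Γ)` or `(Γ, Γ)`. -/
def rBracket (X Y : Fin n → Fin n → A) (i j h l : Fin n) : A :=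
  (rDiag A i h - rDiag A j l) * (X i j * Y h l) + rUp A i h * (X h j * Y i l)
    - rUp A l j * (X i l * Y h j)

/-- Left multiplication by `r` on the row indices one and two of a threefold tensor. -/
def lAct₁₂ (f : Fin n → Fin n → Fin n → A) (i h p : Fin n) : A :=
  rDiag A i h * f i h p + rUp A i h * f h i p

/-- Left multiplication by `r` on the row indices one and three of a threefold tensor. -/
def lAct₁₃ (f : Fin n → Fin n → Fin n → A) (i h p : Fin n) : A :=
  rDiag A i p * f i h p + rUp A i p * f p h i

/-- Left multiplication by `r` on the row indices two and three of a threefold tensor. -/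
def lAct₂₃ (f : Fin n → Fin n → Fin n → A) (i h p : Fin n) : A :=
  rDiag A h p * f i h p + rUp A h p * f i p h

/-- Right multiplication by `r` on the column indices one and two of a threefold tensor. -/
def rAct₁₂ (f : Fin n → Fin n → Fin n → A) (i h p : Fin n) : A :=
  rDiag A i h * f i h p + rUp A h i * f h i p

/-- Right multiplication by `r` on the column indices one and three of a threefold tensor. -/
def rAct₁₃ (f : Fin n → Fin n → Fin n → A) (i h p : Fin n) : A :=
  rDiag A i p * f i h p + rUp A p i * f p h i

/-- Right multiplication by `r` on the column indices two and three of a threefold tensor. -/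
def rAct₂₃ (f : Fin n → Fin n → Fin n → A) (i h p : Fin n) : A :=
  rDiag A h p * f i h p + rUp A p h * f i p h

/-- The classical Yang–Baxter equation `[r₁₂, r₁₃] + [r₁₂, r₂₃] + [r₁₃, r₂₃] = 0`, for the action
by left multiplication. -/
theorem lAct_yangBaxter (f : Fin n → Fin n → Fin n → A) (i h p : Fin n) :
    lAct₁₂ (lAct₁₃ f) i h p - lAct₁₃ (lAct₁₂ f) i h p
      + (lAct₁₂ (lAct₂₃ f) i h p - lAct₂₃ (lAct₁₂ f) i h p)
      + (lAct₁₃ (lAct₂₃ f) i h p - lAct₂₃ (lAct₁₃ f) i h p) = 0 := by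
  simp only [lAct₁₂, lAct₁₃, lAct₂₃, rDiag, rUp]
  have h₁ := lt_trichotomy i h
  have h₂ := lt_trichotomy h p
  have h₃ := lt_trichotomy i p
  rcases h₁ with h₁ | rfl | h₁ <;> rcases h₂ with h₂ | rfl | h₂ <;>
    rcases h₃ with h₃ | h₃ | h₃ <;>
    first
      | (exfalso; order)
      | (simp [*, ne_of_lt, ne_of_gt, not_lt_of_gt, -mul_eq_zero]; done)
      | (simp [*, ne_of_lt, ne_of_gt, not_lt_of_gt, -mul_eq_zero]; ring)

/-- The classical Yang–Baxter equation for the action by right multiplication. -/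
theorem rAct_yangBaxter (f : Fin n → Fin n → Fin n → A) (i h p : Fin n) :
    rAct₁₂ (rAct₁₃ f) i h p - rAct₁₃ (rAct₁₂ f) i h p
      + (rAct₁₂ (rAct₂₃ f) i h p - rAct₂₃ (rAct₁₂ f) i h p)
      + (rAct₁₃ (rAct₂₃ f) i h p - rAct₂₃ (rAct₁₃ f) i h p) = 0 := by
  simp only [rAct₁₂, rAct₁₃, rAct₂₃, rDiag, rUp]
  have h₁ := lt_trichotomy i h
  have h₂ := lt_trichotomy h p
  have h₃ := lt_trichotomy i p
  rcases h₁ with h₁ | rfl | h₁ <;> rcases h₂ with h₂ | rfl | h₂ <;>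
    rcases h₃ with h₃ | h₃ | h₃ <;>
    first
      | (exfalso; order)
      | (simp [*, ne_of_lt, ne_of_gt, not_lt_of_gt, -mul_eq_zero]; done)
      | (simp [*, ne_of_lt, ne_of_gt, not_lt_of_gt, -mul_eq_zero]; ring)

/-- Antisymmetry of `[r, X ⊗ X]`: the symmetric part of `r` is the permutation operator, which
commutes with `X ⊗ X`. -/
theorem rBracket_swap (X : Fin n → Fin n → A) (i j h l : Fin n) :
    rBracket X X i j h l = -rBracket X X h l i j := by
  simp only [rBracket, rDiag, rUp]
  grind

/-- Together with `rBracket_mixed_diag`, this says that an entry of `B` has opposite weights with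
respect to `X a a = β_{aa}` and to its inverse `γ_{aa}`; `rBracket_lower_diag` and
`rBracket_diag_mixed` do the same for an entry of `Γ`. -/
theorem rBracket_upper_diag {X : Fin n → Fin n → A} (hX : ∀ i j, j < i → X i j = 0)
    (i j a : Fin n) :
    rBracket X X i j a a = -((rDiag A i a - rDiag A j a) * (X i j * X a a)) := by
  simp only [rBracket, rDiag, rUp]
  grind

theorem rBracket_lower_diag {Y : Fin n → Fin n → A} (hY : ∀ i j, i < j → Y i j = 0)
    (i j a : Fin n) :
    rBracket Y Y i j a a = (rDiag A i a - rDiag A j a) * (Y i j * Y a a) := by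
  simp only [rBracket, rDiag, rUp]
  grind

theorem rBracket_mixed_diag {X Y : Fin n → Fin n → A}
    (hY : ∀ i j, i < j → Y i j = 0) (i j a : Fin n) :
    rBracket X Y i j a a = (rDiag A i a - rDiag A j a) * (X i j * Y a a) := by
  simp only [rBracket, rDiag, rUp]
  grind

theorem rBracket_diag_mixed {X Y : Fin n → Fin n → A} (hX : ∀ i j, j < i → X i j = 0)
    (a h l : Fin n) :
    rBracket X Y a a h l = (rDiag A h a - rDiag A l a) * (X a a * Y h l) := by
  simp only [rBracket, rDiag, rUp]
  grind

theorem rBracket_upper_left {X Y : Fin n → Fin n → A} (hX : ∀ i j, j < i → X i j = 0)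
    {i j : Fin n} (hij : j < i) (h l : Fin n) : rBracket X Y i j h l = 0 := by
  simp only [rBracket, rDiag, rUp]
  grind

theorem rBracket_lower_right {X Y : Fin n → Fin n → A} (hY : ∀ i j, i < j → Y i j = 0)
    {h l : Fin n} (hhl : h < l) (i j : Fin n) : rBracket X Y i j h l = 0 := by
  simp only [rBracket, rDiag, rUp]
  grind

theorem rBracket_conds {X : Fin n → Fin n → A} (hX : ∀ h l, h < l → X h l * X l h = 0) :
    (∀ i h l : Fin n, h < l → rBracket X X i h i l = X i h * X i l) ∧
    (∀ h l j : Fin n, h < l → rBracket X X h j l j = X h j * X l j) ∧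
    (∀ h l : Fin n, h < l → rBracket X X h h l l = 0) ∧
    (∀ i j h l : Fin n, i < h → l < j → rBracket X X i j h l = 0) ∧
    (∀ i j h l : Fin n, i < h → j < l → rBracket X X i j h l = 2 * (X i l * X h j)) := by
  simp only [rBracket, rDiag, rUp]
  refine ⟨?_, ?_, ?_, ?_, ?_⟩ <;> grind

/-- An alternating bracket with the prescribed values on ordered pairs of entries is `rBracket`. -/
theorem eq_rBracket_of_conds {X : Fin n → Fin n → A} {P : A → A → A}
    (hP : ∀ a b, P a b = -P b a) (hP0 : ∀ a, P a a = 0)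
    (h1 : ∀ i h l : Fin n, h < l → P (X i h) (X i l) = X i h * X i l)
    (h2 : ∀ h l j : Fin n, h < l → P (X h j) (X l j) = X h j * X l j)
    (h4 : ∀ i j h l : Fin n, i < h → l < j → P (X i j) (X h l) = 0)
    (h5 : ∀ i j h l : Fin n, i < h → j < l → P (X i j) (X h l) = 2 * (X i l * X h j))
    (i j h l : Fin n) : P (X i j) (X h l) = rBracket X X i j h l := by
  have key : ∀ i j h l : Fin n, i < h → P (X i j) (X h l) = rBracket X X i j h l := by
    intro i j h l hih
    simp only [rBracket, rDiag, rUp]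
    rcases lt_trichotomy j l with hjl | rfl | hjl
    · rw [h5 _ _ _ _ hih hjl]; grind
    · rw [h2 _ _ _ hih]; grind
    · rw [h4 _ _ _ _ hih hjl]; grind
  have key1 : ∀ i j l : Fin n, j < l → P (X i j) (X i l) = rBracket X X i j i l := by
    intro i j l hjl
    rw [h1 _ _ _ hjl]
    simp only [rBracket, rDiag, rUp]; grind
  rcases lt_trichotomy i h with hih | rfl | hih
  · exact key _ _ _ _ hih
  · rcases lt_trichotomy j l with hjl | rfl | hjl
    · exact key1 _ _ _ hjl
    · rw [hP0]; simp [rBracket, rDiag, rUp]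
    · rw [hP, key1 _ _ _ hjl, ← rBracket_swap]
  · rw [hP, key _ _ _ _ hih, ← rBracket_swap]

end rmatrix

/-! ### Biderivations and the Jacobi identity -/

section biderivation
variable {k A : Type*} [Field k] [CommRing A] [Algebra k A] {n : ℕ}

theorem derivation_rDiag (D : Derivation k A A) (i h : Fin n) : D (rDiag A i h) = 0 := by
  unfold rDiag; split_ifs <;> simp

theorem derivation_rUp (D : Derivation k A A) (i h : Fin n) : D (rUp A i h) = 0 := by
  unfold rUp; split_ifs
  · exact_mod_cast D.map_natCast 2
  · simp

/-- The Jacobi identity on matrix entries. With `ad` denoting the commutator with `r` and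
`T = X ⊗ Y ⊗ Z`, the Leibniz rule gives `{X, {Y, Z}} = ad₂₃ (ad₁₂ + ad₁₃) T` and similar formulas
for the cyclic permutations, so the Jacobiator is minus the Yang–Baxter combination of the operators
`ad` applied to `T`. Left and right multiplications commute, which leaves the Yang–Baxter equation
on rows and on columns. -/
theorem jacobi_rBracket (Q : Derivation k A (Derivation k A A)) (hQ : ∀ a b, Q a b = -Q b a)
    (X Y Z : Fin n → Fin n → A)
    (hXY : ∀ i j h l, Q (X i j) (Y h l) = rBracket X Y i j h l)
    (hXZ : ∀ i j h l, Q (X i j) (Z h l) = rBracket X Z i j h l)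
    (hYZ : ∀ i j h l, Q (Y i j) (Z h l) = rBracket Y Z i j h l) (i j h l p q : Fin n) :
    Q (X i j) (Q (Y h l) (Z p q)) + Q (Y h l) (Q (Z p q) (X i j))
      + Q (Z p q) (Q (X i j) (Y h l)) = 0 := by
  have hYX : ∀ i j h l, Q (Y i j) (X h l) = -rBracket X Y h l i j := fun i j h l => by
    rw [hQ, hXY]
  have hZX : ∀ i j h l, Q (Z i j) (X h l) = -rBracket X Z h l i j := fun i j h l => by
    rw [hQ, hXZ]
  have hZY : ∀ i j h l, Q (Z i j) (Y h l) = -rBracket Y Z h l i j := fun i j h l => by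
    rw [hQ, hYZ]
  have hl := lAct_yangBaxter (fun i h p => X i j * Y h l * Z p q) i h p
  have hr := rAct_yangBaxter (fun j l q => X i j * Y h l * Z p q) j l q
  rw [hYZ, hZX, hXY]
  simp only [rBracket, map_add, map_sub, map_neg, Derivation.leibniz, smul_eq_mul,
    derivation_rDiag, derivation_rUp, mul_zero, add_zero, hXY, hXZ, hYZ, hYX, hZX, hZY]
  simp only [lAct₁₂, lAct₁₃, lAct₂₃, rAct₁₂, rAct₁₃, rAct₂₃] at hl hr
  linear_combination -hl - hr

/-- The derivation `a ↦ Q a b` obtained by fixing the second argument of a biderivation. -/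
def Derivation.flipAt (Q : Derivation k A (Derivation k A A)) (b : A) : Derivation k A A :=
  Derivation.mk'
    { toFun := fun a => Q a b
      map_add' := fun x y => by simp
      map_smul' := fun c x => by simp }
    fun x y => by simp

theorem antisymm_of_generators (Q : Derivation k A (Derivation k A A)) {s : Set A}
    (hs : Algebra.adjoin k s = ⊤) (h : ∀ a ∈ s, ∀ b ∈ s, Q a b = -Q b a) (a b : A) :
    Q a b = -Q b a := by
  have h1 : ∀ b ∈ s, ∀ a, Q a b = -Q b a := by
    intro b hb a
    have : Derivation.flipAt Q b = -Q b :=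
      Derivation.ext_of_adjoin_eq_top s hs fun a ha => h a ha b hb
    exact Derivation.congr_fun this a
  have : Q a = -Derivation.flipAt Q a :=
    Derivation.ext_of_adjoin_eq_top s hs fun b hb => h1 b hb a
  exact Derivation.congr_fun this b

theorem jacobi_of_generators (Q : Derivation k A (Derivation k A A)) {s : Set A}
    (hs : Algebra.adjoin k s = ⊤) (hQ : ∀ a b, Q a b = -Q b a)
    (h : ∀ a ∈ s, ∀ b ∈ s, ∀ c ∈ s, Q a (Q b c) + Q b (Q c a) + Q c (Q a b) = 0) (a b c : A) :
    Q a (Q b c) + Q b (Q c a) + Q c (Q a b) = 0 := by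
  have hJ : ∀ a b c, Q a (Q b c) + Q b (Q c a) + Q c (Q a b) = (⁅Q a, Q b⁆ - Q (Q a b)) c := by
    intro a b c
    rw [Derivation.sub_apply, Derivation.commutator_apply, hQ c a, hQ c (Q a b), map_neg]
    ring
  -- For fixed `a` and `b` the Jacobiator is a derivation in the remaining argument, and it is
  -- cyclically invariant, so the arguments can be freed from the generators one at a time.
  have step : ∀ a b, (∀ c ∈ s, Q a (Q b c) + Q b (Q c a) + Q c (Q a b) = 0) →
      ∀ c, Q a (Q b c) + Q b (Q c a) + Q c (Q a b) = 0 := by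
    intro a b hab c
    have : ⁅Q a, Q b⁆ - Q (Q a b) = 0 :=
      Derivation.ext_of_adjoin_eq_top s hs fun c hc => by
        rw [← hJ, hab c hc]; rfl
    rw [hJ, this]; rfl
  have h1 : ∀ a ∈ s, ∀ b ∈ s, ∀ c, Q a (Q b c) + Q b (Q c a) + Q c (Q a b) = 0 :=
    fun a ha b hb => step a b (h a ha b hb)
  have h2 : ∀ a ∈ s, ∀ b c, Q a (Q b c) + Q b (Q c a) + Q c (Q a b) = 0 := by
    intro a ha b c
    refine step a b (fun c hc => ?_) c
    have := h1 c hc a ha b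
    linear_combination this
  refine step a b (fun c hc => ?_) c
  have := h2 c hc a b
  linear_combination this

end biderivation

/-! ### The bracket on the coordinate ring -/

section GLdual
variable (k : Type*) [Field k] (n : ℕ)

/-- The entries of `B` (index `false`) and of `Γ` (index `true`), zeros included, as one family. -/
def GLdualEntry : Bool → Fin n → Fin n → GLdual k n
  | false => Bent k n
  | true => Gent k n

theorem Bent_eq_zero {i j : Fin n} (h : j < i) : Bent k n i j = 0 := dif_neg (not_le.2 h)

theorem Gent_eq_zero {i j : Fin n} (h : i < j) : Gent k n i j = 0 := dif_neg (not_le.2 h)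

/-- The quotient map from the polynomial algebra, as a morphism of `k`-algebras. -/
def GLdualProj : MvPolynomial (GLdualVar n) k →ₐ[k] GLdual k n :=
  Ideal.Quotient.mkₐ k (GLdualIdeal k n)

theorem GLdualProj_surjective : Function.Surjective (GLdualProj k n) :=
  Ideal.Quotient.mkₐ_surjective k (GLdualIdeal k n)

theorem GLdualProj_ker : RingHom.ker (GLdualProj k n) = GLdualIdeal k n :=
  Ideal.Quotient.mkₐ_ker k (GLdualIdeal k n)

/-- Whether a variable is an entry of `Γ`, in the encoding of `GLdualEntry`. -/
def GLdualVar.isLower {n : ℕ} : GLdualVar n → Bool := Sum.isRight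

/-- The pair (row, column) of a variable. -/
def GLdualVar.idx {n : ℕ} : GLdualVar n → Fin n × Fin n
  | Sum.inl p => p.1
  | Sum.inr p => p.1

theorem GLdualProj_X (x : GLdualVar n) :
    GLdualProj k n (MvPolynomial.X x) = GLdualEntry k n x.isLower x.idx.1 x.idx.2 := by
  rcases x with ⟨⟨i, j⟩, h⟩ | ⟨⟨i, j⟩, h⟩
  · exact (dif_pos h : Bent k n i j = _).symm
  · exact (dif_pos h : Gent k n i j = _).symm

theorem GLdualEntry_cases (s : Bool) (i j : Fin n) :
    (∃ x : GLdualVar n, x.isLower = s ∧ x.idx = (i, j)) ∨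
      (GLdualEntry k n s i j = 0 ∧ (s = false ∧ j < i ∨ s = true ∧ i < j)) := by
  rcases s with _ | _
  · rcases le_or_gt i j with h | h
    · exact Or.inl ⟨Sum.inl ⟨(i, j), h⟩, rfl, rfl⟩
    · exact Or.inr ⟨Bent_eq_zero k n h, Or.inl ⟨rfl, h⟩⟩
  · rcases le_or_gt j i with h | h
    · exact Or.inl ⟨Sum.inr ⟨(i, j), h⟩, rfl, rfl⟩
    · exact Or.inr ⟨Gent_eq_zero k n h, Or.inr ⟨rfl, h⟩⟩

/-- The set of all matrix entries, which generates the algebra. -/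
def GLdualEntries : Set (GLdual k n) := {a | ∃ s i j, a = GLdualEntry k n s i j}

theorem adjoin_GLdualEntries : Algebra.adjoin k (GLdualEntries k n) = ⊤ := by
  rw [eq_top_iff, ← (AlgHom.range_eq_top _).2 (GLdualProj_surjective k n), ← Algebra.map_top,
    ← MvPolynomial.adjoin_range_X, AlgHom.map_adjoin]
  refine Algebra.adjoin_mono ?_
  rintro _ ⟨_, ⟨x, rfl⟩, rfl⟩
  exact ⟨_, _, _, GLdualProj_X k n x⟩

/-- The prescribed value of the bracket of `GLdualEntry k n s i j` with `GLdualEntry k n t h l`. -/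
def entryBracket : Bool → Bool → Fin n → Fin n → Fin n → Fin n → GLdual k n
  | true, false, i, j, h, l => -rBracket (Bent k n) (Gent k n) h l i j
  | s, t, i, j, h, l => rBracket (GLdualEntry k n s) (GLdualEntry k n t) i j h l

theorem entryBracket_swap (s t : Bool) (i j h l : Fin n) :
    entryBracket k n s t i j h l = -entryBracket k n t s h l i j := by
  rcases s with _ | _ <;> rcases t with _ | _
  · exact rBracket_swap _ _ _ _ _
  · exact (neg_neg _).symm
  · rfl
  · exact rBracket_swap _ _ _ _ _

/-- The prescribed values vanish, as they must, on the entries `0` outside the triangles. -/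
theorem entryBracket_left_eq_zero (s t : Bool) {i j : Fin n}
    (hs : s = false ∧ j < i ∨ s = true ∧ i < j) (h l : Fin n) :
    entryBracket k n s t i j h l = 0 := by
  rcases hs with ⟨rfl, hij⟩ | ⟨rfl, hij⟩
  · rcases t with _ | _ <;>
    exact rBracket_upper_left (fun _ _ => Bent_eq_zero k n) hij _ _
  · rw [entryBracket_swap, neg_eq_zero]
    rcases t with _ | _ <;>
    exact rBracket_lower_right (fun _ _ => Gent_eq_zero k n) hij _ _

/-- The prescribed values are compatible with `β_{aa} γ_{aa} = 1`. -/
theorem entryBracket_relation (s : Bool) (i j a : Fin n) :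
    Bent k n a a * entryBracket k n s true i j a a
      + Gent k n a a * entryBracket k n s false i j a a = 0 := by
  have hB : ∀ i j, j < i → Bent k n i j = 0 := fun _ _ => Bent_eq_zero k n
  have hG : ∀ i j, i < j → Gent k n i j = 0 := fun _ _ => Gent_eq_zero k n
  rcases s with _ | _
  · change _ * rBracket (Bent k n) (Gent k n) i j a a
      + _ * rBracket (Bent k n) (Bent k n) i j a a = 0
    rw [rBracket_mixed_diag hG, rBracket_upper_diag hB]
    ring
  · change _ * rBracket (Gent k n) (Gent k n) i j a a
      + _ * -rBracket (Bent k n) (Gent k n) a a i j = 0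
    rw [rBracket_diag_mixed hB, rBracket_lower_diag hG]
    ring

/-- Values prescribed on all matrix entries define a derivation if they respect the relations
`β_{aa} γ_{aa} = 1` and vanish outside the triangles. -/
theorem exists_GLdual_derivation {M : Type*} [AddCommGroup M] [Module k M] [Module (GLdual k n) M]
    [IsScalarTower k (GLdual k n) M] (f : Bool → Fin n → Fin n → M)
    (hf : ∀ a, Bent k n a a • f true a a + Gent k n a a • f false a a = 0)
    (hf0 : ∀ s i j, (s = false ∧ j < i ∨ s = true ∧ i < j) → f s i j = 0) :
    ∃ D : Derivation k (GLdual k n) M, ∀ s i j, D (GLdualEntry k n s i j) = f s i j := by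
  obtain ⟨D, hD⟩ := exists_derivation_of_relations (GLdualProj k n) (GLdualProj_surjective k n)
    (fun i : Fin n => (Sum.inl ⟨(i, i), le_refl i⟩ : GLdualVar n))
    (fun i : Fin n => (Sum.inr ⟨(i, i), le_refl i⟩ : GLdualVar n))
    (GLdualProj_ker k n) (fun x => f x.isLower x.idx.1 x.idx.2)
    (fun a => by
      have hβ := GLdualProj_X k n (Sum.inl ⟨(a, a), le_refl a⟩)
      have hγ := GLdualProj_X k n (Sum.inr ⟨(a, a), le_refl a⟩)
      have := hf a
      rw [show Bent k n a a = _ from hβ.symm, show Gent k n a a = _ from hγ.symm] at this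
      exact this)
  refine ⟨D, fun s i j => ?_⟩
  rcases GLdualEntry_cases k n s i j with ⟨x, rfl, hx⟩ | ⟨h0, h1⟩
  · have := hD x
    rwa [GLdualProj_X, hx] at this
  · rw [h0, map_zero, hf0 _ _ _ h1]

theorem exists_GLdual_biderivation :
    ∃ Q : Derivation k (GLdual k n) (Derivation k (GLdual k n) (GLdual k n)),
      ∀ s t i j h l, Q (GLdualEntry k n s i j) (GLdualEntry k n t h l)
        = entryBracket k n s t i j h l := by
  have h1 : ∀ s i j, ∃ D : Derivation k (GLdual k n) (GLdual k n),
      ∀ t h l, D (GLdualEntry k n t h l) = entryBracket k n s t i j h l := fun s i j =>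
    exists_GLdual_derivation k n (fun t h l => entryBracket k n s t i j h l)
      (entryBracket_relation k n s i j) fun t h l ht => by
        rw [entryBracket_swap, entryBracket_left_eq_zero k n t s ht, neg_zero]
  choose D hD using h1
  have hext : ∀ {D₁ D₂ : Derivation k (GLdual k n) (GLdual k n)},
      (∀ t h l, D₁ (GLdualEntry k n t h l) = D₂ (GLdualEntry k n t h l)) → D₁ = D₂ := fun h =>
    Derivation.ext_of_adjoin_eq_top _ (adjoin_GLdualEntries k n) <| by
      rintro _ ⟨t, i, j, rfl⟩; exact h t i j
  obtain ⟨Q, hQ⟩ := exists_GLdual_derivation k n D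
    (fun a => hext fun t h l => by
      have := entryBracket_relation k n t h l a
      rw [Derivation.add_apply, Derivation.smul_apply, Derivation.smul_apply, hD, hD,
        entryBracket_swap, entryBracket_swap k n false, smul_eq_mul, smul_eq_mul,
        Derivation.zero_apply]
      linear_combination -this)
    (fun s i j hs => hext fun t h l => by
      rw [hD, entryBracket_left_eq_zero k n s t hs, Derivation.zero_apply])
  exact ⟨Q, fun s t i j h l => by rw [hQ, hD]⟩

theorem mixed_eq_rBracket (i l j s : Fin n) :
    (((if i = j then 1 else 0) - (if l = s then 1 else 0) : k)) •
              (Bent k n j s * Gent k n i l) +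
            (if j < i then (2 : k) • (Gent k n j l * Bent k n i s) else 0) -
            (if l < s then (2 : k) • (Bent k n j l * Gent k n i s) else 0)
      = rBracket (Bent k n) (Gent k n) j s i l := by
  have h2 : ∀ a : GLdual k n, (2 : k) • a = 2 * a := fun a => by rw [two_smul, two_mul]
  have h1 : (((if i = j then 1 else 0) - (if l = s then 1 else 0) : k)) •
      (Bent k n j s * Gent k n i l) =
      (rDiag (GLdual k n) j i - rDiag (GLdual k n) s l) * (Bent k n j s * Gent k n i l) := by
    rw [sub_smul, sub_mul]
    simp only [rDiag, ite_smul, ite_mul, one_smul, zero_smul, one_mul, zero_mul, eq_comm]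
  rw [h1]
  simp only [h2, rBracket, rUp, ite_mul, zero_mul]
  rw [mul_comm (Gent k n j l)]

theorem triangularBracketConds_of_eq {P : GLdual k n → GLdual k n → GLdual k n}
    {X : Fin n → Fin n → GLdual k n} (hX : ∀ h l, h < l → X h l * X l h = 0)
    (hP : ∀ i j h l, P (X i j) (X h l) = rBracket X X i j h l) : TriangularBracketConds P X := by
  have h2 : ∀ a : GLdual k n, (2 : k) • a = 2 * a := fun a => by rw [two_smul, two_mul]
  simp only [TriangularBracketConds, h2, hP]
  exact rBracket_conds hX

theorem eq_rBracket_of_triangularBracketConds {P : GLdual k n → GLdual k n → GLdual k n}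
    {X : Fin n → Fin n → GLdual k n}
    (hP : ∀ a b, P a b = -P b a) (hP0 : ∀ a, P a a = 0)
    (hX : TriangularBracketConds P X) (i j h l : Fin n) :
    P (X i j) (X h l) = rBracket X X i j h l := by
  have h2 : ∀ a : GLdual k n, (2 : k) • a = 2 * a := fun a => by rw [two_smul, two_mul]
  obtain ⟨h1, h2', -, h4, h5⟩ := hX
  exact eq_rBracket_of_conds hP hP0 h1 h2' h4
    (fun i j h l hi hj => (h5 i j h l hi hj).trans (h2 _)) i j h l

end GLdual

/-- `F[(GL_n)*_P]` carries a unique Poisson bracket satisfying the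
relations (2.17) on the entries of `B` and of `Γ` and the mixed relations (2.18);
it is bilinear, antisymmetric, a biderivation (Leibniz), and satisfies Jacobi. -/
theorem GLdual_poisson {k : Type*} [Field k] [CharZero k] (n : ℕ) :
    ∃! P : GLdual k n → GLdual k n → GLdual k n,
      (∀ c : k, ∀ a b : GLdual k n, P (c • a) b = c • P a b ∧ P a (c • b) = c • P a b) ∧
      (∀ a b c : GLdual k n, P (a + b) c = P a c + P b c) ∧
      (∀ a b c : GLdual k n, P a (b + c) = P a b + P a c) ∧
      (∀ a b : GLdual k n, P a b = - P b a) ∧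
      (∀ a b c : GLdual k n, P a (b * c) = P a b * c + b * P a c) ∧
      (∀ a b c : GLdual k n, P a (P b c) + P b (P c a) + P c (P a b) = 0) ∧
      TriangularBracketConds P (Bent k n) ∧
      TriangularBracketConds P (Gent k n) ∧
      (∀ i l j s : Fin n,
        P (Bent k n j s) (Gent k n i l) =
          (((if i = j then 1 else 0) - (if l = s then 1 else 0) : k)) •
              (Bent k n j s * Gent k n i l) +
            (if j < i then (2 : k) • (Gent k n j l * Bent k n i s) else 0) -
            (if l < s then (2 : k) • (Bent k n j l * Gent k n i s) else 0)) := by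
  obtain ⟨Q, hQ⟩ := exists_GLdual_biderivation k n
  have hs := adjoin_GLdualEntries k n
  have hanti : ∀ a b, Q a b = -Q b a := antisymm_of_generators Q hs <| by
    rintro _ ⟨s, i, j, rfl⟩ _ ⟨t, h, l, rfl⟩
    rw [hQ, hQ, entryBracket_swap]
  have hBB : ∀ i j h l, Q (Bent k n i j) (Bent k n h l) = rBracket (Bent k n) (Bent k n) i j h l :=
    hQ false false
  have hBG : ∀ i j h l, Q (Bent k n i j) (Gent k n h l) = rBracket (Bent k n) (Gent k n) i j h l :=
    hQ false true
  have hGG : ∀ i j h l, Q (Gent k n i j) (Gent k n h l) = rBracket (Gent k n) (Gent k n) i j h l :=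
    hQ true true
  refine ⟨fun a b => Q a b, ⟨?_, ?_, ?_, hanti, ?_, ?_, ?_, ?_, ?_⟩, ?_⟩
  · intro c a b
    simp
  · intro a b c
    simp
  · intro a b c
    simp
  · intro a b c
    simp only [Derivation.leibniz, smul_eq_mul]
    ring
  · refine jacobi_of_generators Q hs hanti ?_
    rintro _ ⟨s, i, j, rfl⟩ _ ⟨t, h, l, rfl⟩ _ ⟨u, p, q, rfl⟩
    have hBBB := jacobi_rBracket Q hanti _ _ _ hBB hBB hBB
    have hBBG := jacobi_rBracket Q hanti _ _ _ hBB hBG hBG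
    have hBGG := jacobi_rBracket Q hanti _ _ _ hBG hBG hGG
    have hGGG := jacobi_rBracket Q hanti _ _ _ hGG hGG hGG
    -- The Jacobiator is cyclically invariant, so three entries can be rotated until those of `B`
    -- precede those of `Γ`.
    rcases s with _ | _ <;> rcases t with _ | _ <;> rcases u with _ | _ <;>
      simp only [GLdualEntry]
    · exact hBBB i j h l p q
    · exact hBBG i j h l p q
    · linear_combination hBBG p q i j h l
    · exact hBGG i j h l p q
    · linear_combination hBBG h l p q i j
    · linear_combination hBGG h l p q i j
    · linear_combination hBGG p q i j h l
    · exact hGGG i j h l p q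
  · exact triangularBracketConds_of_eq k n
      (fun h l hl => by rw [Bent_eq_zero k n hl, mul_zero]) hBB
  · exact triangularBracketConds_of_eq k n
      (fun h l hl => by rw [Gent_eq_zero k n hl, zero_mul]) hGG
  · intro i l j s
    rw [mixed_eq_rBracket]
    exact hBG j s i l
  · rintro P ⟨hsmul, hadd, hadd', hP, hmul, -, hPB, hPG, hmix⟩
    have hP0 : ∀ a, P a a = 0 := fun a => by
      have h2 : (2 : k) • P a a = 0 := by
        rw [two_smul]; nth_rewrite 1 [hP a a]; exact neg_add_cancel _
      exact (smul_eq_zero_iff_right (two_ne_zero' k)).1 h2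
    have hPBG : ∀ i j h l, P (Bent k n i j) (Gent k n h l)
        = rBracket (Bent k n) (Gent k n) i j h l := fun i j h l => by
      rw [hmix, mixed_eq_rBracket]
    have hgen : ∀ a ∈ GLdualEntries k n, ∀ b ∈ GLdualEntries k n, P a b = Q a b := by
      rintro _ ⟨s, i, j, rfl⟩ _ ⟨t, h, l, rfl⟩
      rw [hQ]
      rcases s with _ | _ <;> rcases t with _ | _
      · exact eq_rBracket_of_triangularBracketConds k n hP hP0 hPB i j h l
      · exact hPBG i j h l
      · exact (hP _ _).trans (congrArg _ (hPBG h l i j))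
      · exact eq_rBracket_of_triangularBracketConds k n hP hP0 hPG i j h l
    -- Agreement on generators gives agreement in the second argument, then, by antisymmetry, in
    -- the first.
    let D : GLdual k n → Derivation k (GLdual k n) (GLdual k n) := fun a =>
      Derivation.mk'
        { toFun := P a
          map_add' := hadd' a
          map_smul' := fun c b => (hsmul c a b).2 }
        fun x y => by
          change P a (x * y) = x * P a y + y * P a x
          rw [hmul]; ring
    have h1 : ∀ a ∈ GLdualEntries k n, ∀ b, P a b = Q a b := fun a ha b =>
      Derivation.congr_fun (D1 := D a) (Derivation.ext_of_adjoin_eq_top _ hs (hgen a ha)) b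
    funext a b
    refine Derivation.congr_fun (D1 := D a)
      (Derivation.ext_of_adjoin_eq_top _ hs fun b hb => ?_) b
    change P a b = Q a b
    rw [hP, h1 b hb, hanti a b]

end
end
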